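/- Let K be a bounded convex open subset of R^d with diameter h_K and let v ∈ H^1(K). Then the L^2(K)-norm of v minus its mean value over K is bounded by (1/π)·h_K·‖∇v‖_{L^2(K)}. -/

import Mathlib

open MeasureTheory

/-!
By mollification and exhaustion it suffices to treat a `C¹` function `f` of mean zero. If the
inequality failed for `f` on `K` by a fixed proportion of the volume, hyperplanes turning around a
codimension-two subspace would cut `K`, by the intermediate value theorem, into two convex pieces on
both of which `f` has mean zero, and one of the pieces would inherit the defect. Iterating, one
reaches arbitrarily thin pieces: each lies close to a segment, along which `f` is nearly a function
of one variable. The volume of the sections orthogonal to the segment is log-concave by the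
Prékopa–Leindler inequality, and for log-concave weights on an interval of length `ℓ` the Poincaré
inequality with constant `(ℓ / π) ^ 2` follows by comparing the logarithmic derivative of
`cos (π x / ℓ) / √ρ` with a Riccati equation. This contradicts the defect.
-/

namespace PayneWeinberger

open Filter Set Topology
open scoped ENNReal Pointwise

section PrekopaLeindler

lemma volume_add_le_of_isCompact {A B : Set ℝ} (hA : IsCompact A) (hB : IsCompact B)
    (hA' : A.Nonempty) (hB' : B.Nonempty) : volume A + volume B ≤ volume (A + B) := by
  obtain ⟨a, haA, ha⟩ := hA.exists_isGreatest hA'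
  obtain ⟨b, hbB, hb⟩ := hB.exists_isLeast hB'
  have hinter : (b +ᵥ A) ∩ (a +ᵥ B) ⊆ {a + b} := by
    rintro _ ⟨⟨x, hx, rfl⟩, ⟨y, hy, hxy⟩⟩
    have hxa := ha hx
    have hby := hb hy
    simp only [vadd_eq_add, mem_singleton_iff] at hxy ⊢
    linarith
  calc volume A + volume B = volume (b +ᵥ A) + volume (a +ᵥ B) := by simp only [measure_vadd]
    _ = volume ((b +ᵥ A) ∪ (a +ᵥ B)) :=
      (measure_union₀ (hB.vadd a).measurableSet.nullMeasurableSet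
        (measure_mono_null hinter (by simp))).symm
    _ ≤ volume (A + B) := measure_mono <| union_subset
      (by rintro _ ⟨x, hx, rfl⟩; exact ⟨x, hx, b, hbB, add_comm _ _⟩)
      (by rintro _ ⟨y, hy, rfl⟩; exact ⟨a, haA, y, hy, rfl⟩)

lemma volume_add_le {A B : Set ℝ} (hA : MeasurableSet A) (hB : MeasurableSet B)
    (hA' : A.Nonempty) (hB' : B.Nonempty) : volume A + volume B ≤ volume (A + B) := by
  obtain ⟨a, ha⟩ := hA'
  obtain ⟨b, hb⟩ := hB'
  rw [hA.measure_eq_iSup_isCompact, hB.measure_eq_iSup_isCompact]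
  simp only [iSup_and']
  refine ENNReal.biSup_add_biSup_le' ⟨∅, empty_subset _, isCompact_empty⟩
    ⟨∅, empty_subset _, isCompact_empty⟩ fun S hS T hT ↦ ?_
  calc volume S + volume T ≤ volume (insert a S) + volume (insert b T) := by
        gcongr <;> exact subset_insert _ _
    _ ≤ volume (insert a S + insert b T) :=
      volume_add_le_of_isCompact (hS.2.insert a) (hT.2.insert b) (insert_nonempty _ _)
        (insert_nonempty _ _)
    _ ≤ volume (A + B) :=
      measure_mono (add_subset_add (insert_subset ha hS.1) (insert_subset hb hT.1))

lemma volume_smul_add_smul_le {a b : ℝ} (ha : 0 ≤ a) (hb : 0 ≤ b) {A B : Set ℝ}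
    (hA : MeasurableSet A) (hB : MeasurableSet B) (hA' : A.Nonempty) (hB' : B.Nonempty) :
    ENNReal.ofReal a * volume A + ENNReal.ofReal b * volume B ≤ volume (a • A + b • B) := by
  have hscale : ∀ {c : ℝ}, 0 ≤ c → ∀ S : Set ℝ,
      ENNReal.ofReal c * volume S = volume (c • S) := fun hc S ↦ by
    simp [Measure.addHaar_smul, abs_of_nonneg hc]
  rw [hscale ha, hscale hb]
  exact volume_add_le (hA.const_smul₀ a) (hB.const_smul₀ b) hA'.smul_set hB'.smul_set

lemma rpow_mul_rpow_le_add_mul {a b : ℝ} (ha : 0 < a) (hb : 0 < b) (hab : a + b = 1)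
    (x y : ℝ≥0∞) : x ^ a * y ^ b ≤ ENNReal.ofReal a * x + ENNReal.ofReal b * y := by
  have hconj : (a⁻¹).HolderConjugate b⁻¹ := by
    rw [Real.holderConjugate_iff]
    exact ⟨(one_lt_inv₀ ha).2 (by linarith), by simpa using hab⟩
  have hyoung := ENNReal.young_inequality (x ^ a) (y ^ b) hconj
  rwa [← ENNReal.rpow_mul, ← ENNReal.rpow_mul, mul_inv_cancel₀ ha.ne', mul_inv_cancel₀ hb.ne',
    ENNReal.rpow_one, ENNReal.rpow_one, ENNReal.ofReal_inv_of_pos ha, ENNReal.ofReal_inv_of_pos hb,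
    div_eq_mul_inv, div_eq_mul_inv, inv_inv, inv_inv, mul_comm x, mul_comm y] at hyoung

lemma lintegral_eq_lintegral_measure_ofReal_lt {α : Type*} [MeasurableSpace α] {μ : Measure α}
    {f : α → ℝ≥0∞} (hf : Measurable f) (hfin : ∀ x, f x ≠ ∞) :
    ∫⁻ x, f x ∂μ = ∫⁻ r in Ioi (0 : ℝ), μ {x | ENNReal.ofReal r < f x} := by
  have hcake := lintegral_eq_lintegral_meas_lt μ (.of_forall fun x ↦ (f x).toReal_nonneg)
    hf.ennreal_toReal.aemeasurable
  simp only [ENNReal.ofReal_toReal (hfin _)] at hcake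
  rw [hcake]
  refine setLIntegral_congr_fun measurableSet_Ioi fun r hr ↦ ?_
  simp only [ENNReal.ofReal_lt_iff_lt_toReal (le_of_lt hr) (hfin _)]

section Real

variable {a b : ℝ} {f g h : ℝ → ℝ≥0∞}

lemma smul_superlevel_add_subset (ha : 0 < a) (hb : 0 < b) (hab : a + b = 1)
    (hfgh : ∀ x y, f x ^ a * g y ^ b ≤ h (a • x + b • y)) (r : ℝ≥0∞) :
    a • {x | r < f x} + b • {y | r < g y} ⊆ {z | r < h z} := by
  rintro _ ⟨_, ⟨x, hx, rfl⟩, _, ⟨y, hy, rfl⟩, rfl⟩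
  calc r = r ^ a * r ^ b := by
        rw [← ENNReal.rpow_add_of_nonneg _ _ ha.le hb.le, hab, ENNReal.rpow_one]
    _ < f x ^ a * g y ^ b :=
        ENNReal.mul_lt_mul (ENNReal.rpow_lt_rpow hx ha) (ENNReal.rpow_lt_rpow hy hb)
    _ ≤ h (a • x + b • y) := hfgh x y

lemma add_mul_lintegral_le_of_iSup_eq_one (ha : 0 < a) (hb : 0 < b) (hab : a + b = 1)
    (hf : Measurable f) (hg : Measurable g) (hh : Measurable h)
    (hf1 : ⨆ x, f x = 1) (hg1 : ⨆ x, g x = 1) (hh1 : ∀ x, h x ≠ ∞)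
    (hfgh : ∀ x y, f x ^ a * g y ^ b ≤ h (a • x + b • y)) :
    ENNReal.ofReal a * (∫⁻ x, f x) + ENNReal.ofReal b * (∫⁻ x, g x) ≤ ∫⁻ x, h x := by
  have hf_le : ∀ x, f x ≤ 1 := fun x ↦ hf1 ▸ le_iSup f x
  have hg_le : ∀ x, g x ≤ 1 := fun x ↦ hg1 ▸ le_iSup g x
  have hmeas : ∀ u : ℝ → ℝ≥0∞, Measurable fun r : ℝ ↦ volume {x | ENNReal.ofReal r < u x} :=
    fun u ↦ Antitone.measurable fun r s hrs ↦
      measure_mono fun x (hx : _ < _) ↦ (ENNReal.ofReal_le_ofReal hrs).trans_lt hx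
  rw [lintegral_eq_lintegral_measure_ofReal_lt hf fun x ↦ ne_top_of_le_ne_top (by simp) (hf_le x),
    lintegral_eq_lintegral_measure_ofReal_lt hg fun x ↦ ne_top_of_le_ne_top (by simp) (hg_le x),
    lintegral_eq_lintegral_measure_ofReal_lt hh hh1, ← lintegral_const_mul _ (hmeas f),
    ← lintegral_const_mul _ (hmeas g), ← lintegral_add_left ((hmeas f).const_mul _)]
  refine setLIntegral_mono (hmeas h) fun r _ ↦ ?_
  rcases lt_or_ge r 1 with hr | hr
  · have hnonempty : ∀ u : ℝ → ℝ≥0∞, ⨆ x, u x = 1 → {x | ENNReal.ofReal r < u x}.Nonempty :=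
      fun u hu ↦ exists_lt_of_lt_ciSup (f := u) (by simpa [hu] using hr)
    exact (volume_smul_add_smul_le ha.le hb.le (measurableSet_lt measurable_const hf)
      (measurableSet_lt measurable_const hg) (hnonempty f hf1) (hnonempty g hg1)).trans
        (measure_mono (smul_superlevel_add_subset ha hb hab hfgh _))
  · have hr' : 1 ≤ ENNReal.ofReal r := by simpa using hr
    simp [((hf_le _).trans hr').not_gt, ((hg_le _).trans hr').not_gt]

lemma lintegral_rpow_mul_rpow_le_of_iSup_eq_one (ha : 0 < a) (hb : 0 < b) (hab : a + b = 1)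
    (hf : Measurable f) (hg : Measurable g) (hh : Measurable h)
    (hf1 : ⨆ x, f x = 1) (hg1 : ⨆ x, g x = 1)
    (hfgh : ∀ x y, f x ^ a * g y ^ b ≤ h (a • x + b • y)) :
    (∫⁻ x, f x) ^ a * (∫⁻ x, g x) ^ b ≤ ∫⁻ x, h x := by
  have htrunc : ∀ x y, f x ^ a * g y ^ b ≤ min (h (a • x + b • y)) 1 := fun x y ↦
    le_min (hfgh x y) <| mul_le_one' (ENNReal.rpow_le_one (hf1 ▸ le_iSup f x) ha.le)
      (ENNReal.rpow_le_one (hg1 ▸ le_iSup g y) hb.le)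
  calc (∫⁻ x, f x) ^ a * (∫⁻ x, g x) ^ b
      ≤ ENNReal.ofReal a * (∫⁻ x, f x) + ENNReal.ofReal b * (∫⁻ x, g x) :=
        rpow_mul_rpow_le_add_mul ha hb hab _ _
    _ ≤ ∫⁻ x, min (h x) 1 :=
        add_mul_lintegral_le_of_iSup_eq_one ha hb hab hf hg (hh.min measurable_const) hf1 hg1
          (fun x ↦ ne_top_of_le_ne_top ENNReal.one_ne_top (min_le_right _ _)) htrunc
    _ ≤ ∫⁻ x, h x := lintegral_mono fun x ↦ min_le_left _ _

lemma lintegral_rpow_mul_rpow_le_of_iSup_ne_top (ha : 0 < a) (hb : 0 < b) (hab : a + b = 1)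
    (hf : Measurable f) (hg : Measurable g) (hh : Measurable h)
    (hf_top : ⨆ x, f x ≠ ∞) (hg_top : ⨆ x, g x ≠ ∞)
    (hfgh : ∀ x y, f x ^ a * g y ^ b ≤ h (a • x + b • y)) :
    (∫⁻ x, f x) ^ a * (∫⁻ x, g x) ^ b ≤ ∫⁻ x, h x := by
  set F := ⨆ x, f x with hF
  set G := ⨆ x, g x with hG
  rcases eq_or_ne F 0 with hF0 | hF0
  · have hf0 : f = 0 := by simpa [hF, funext_iff] using hF0
    simp [hf0, ha]
  rcases eq_or_ne G 0 with hG0 | hG0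
  · have hg0 : g = 0 := by simpa [hG, funext_iff] using hG0
    simp [hg0, hb]
  have hscale : ∀ x y, (F⁻¹ * x) ^ a * (G⁻¹ * y) ^ b = (F ^ a * G ^ b)⁻¹ * (x ^ a * y ^ b) := by
    intro x y
    rw [ENNReal.mul_rpow_of_nonneg _ _ ha.le, ENNReal.mul_rpow_of_nonneg _ _ hb.le,
      ENNReal.inv_rpow, ENNReal.inv_rpow, ENNReal.mul_inv (.inl (by simp [hF0, hf_top]))
      (.inl (by simp [hF0, hf_top]))]
    ring
  have hM0 : F ^ a * G ^ b ≠ 0 := by simp [hF0, hf_top, hG0, hg_top]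
  have hMtop : F ^ a * G ^ b ≠ ∞ :=
    ENNReal.mul_ne_top (by simp [hF0, hf_top]) (by simp [hG0, hg_top])
  have hnormalized := lintegral_rpow_mul_rpow_le_of_iSup_eq_one ha hb hab
    (hf.const_mul F⁻¹) (hg.const_mul G⁻¹) (hh.const_mul (F ^ a * G ^ b)⁻¹)
    (by rw [← ENNReal.mul_iSup, ENNReal.inv_mul_cancel hF0 hf_top])
    (by rw [← ENNReal.mul_iSup, ENNReal.inv_mul_cancel hG0 hg_top])
    fun x y ↦ by rw [hscale]; gcongr; exact hfgh x y
  rwa [lintegral_const_mul _ hf, lintegral_const_mul _ hg, lintegral_const_mul _ hh, hscale,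
    ENNReal.mul_le_mul_iff_right (ENNReal.inv_ne_zero.2 hMtop) (ENNReal.inv_ne_top.2 hM0)]
    at hnormalized

end Real

lemma tendsto_lintegral_min_natCast {α : Type*} [MeasurableSpace α] {μ : Measure α}
    {f : α → ℝ≥0∞} (hf : Measurable f) :
    Tendsto (fun n : ℕ ↦ ∫⁻ x, min (f x) n ∂μ) atTop (𝓝 (∫⁻ x, f x ∂μ)) := by
  refine lintegral_tendsto_of_tendsto_of_monotone (fun n ↦ by fun_prop)
    (.of_forall fun x n m hnm ↦ ?_) (.of_forall fun x ↦ ?_)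
  · exact min_le_min le_rfl (by exact_mod_cast hnm)
  · simpa using (tendsto_const_nhds (x := f x)).min ENNReal.tendsto_nat_nhds_top

/-- A measure on a real vector space satisfies the Prékopa–Leindler inequality if the integral is
log-concave along pointwise log-concave interpolations of functions. -/
def PrekopaLeindler {E : Type*} [AddCommGroup E] [Module ℝ E] [MeasurableSpace E]
    (μ : Measure E) : Prop :=
  ∀ ⦃a b : ℝ⦄, 0 < a → 0 < b → a + b = 1 → ∀ ⦃f g h : E → ℝ≥0∞⦄,
    Measurable f → Measurable g → Measurable h →
    (∀ x y, f x ^ a * g y ^ b ≤ h (a • x + b • y)) →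
    (∫⁻ x, f x ∂μ) ^ a * (∫⁻ x, g x ∂μ) ^ b ≤ ∫⁻ x, h x ∂μ

lemma prekopaLeindler_real : PrekopaLeindler (volume : Measure ℝ) := by
  intro a b ha hb hab f g h hf hg hh hfgh
  rcases eq_or_ne (∫⁻ x, f x) 0 with hf0 | hf0
  · simp [hf0, ha]
  rcases eq_or_ne (∫⁻ x, g x) 0 with hg0 | hg0
  · simp [hg0, hb]
  have hlim : Tendsto (fun n : ℕ ↦ (∫⁻ x, min (f x) n) ^ a * (∫⁻ x, min (g x) n) ^ b) atTop
      (𝓝 ((∫⁻ x, f x) ^ a * (∫⁻ x, g x) ^ b)) :=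
    ENNReal.Tendsto.mul ((tendsto_lintegral_min_natCast hf).ennrpow_const a)
      (.inl (by simp [hf0, ha, ha.not_gt])) ((tendsto_lintegral_min_natCast hg).ennrpow_const b)
      (.inl (by simp [hg0, hb, hb.not_gt]))
  have hbdd : ∀ (u : ℝ → ℝ≥0∞) (n : ℕ), ⨆ x, min (u x) n ≠ ∞ := fun u n ↦
    ne_top_of_le_ne_top (ENNReal.natCast_ne_top n) (iSup_le fun x ↦ min_le_right _ _)
  refine le_of_tendsto' hlim fun n ↦ lintegral_rpow_mul_rpow_le_of_iSup_ne_top ha hb hab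
    (by fun_prop) (by fun_prop) hh (hbdd f n) (hbdd g n) fun x y ↦ (hfgh x y).trans' ?_
  gcongr <;> exact min_le_left _ _

section Constructions

variable {E F : Type*} [AddCommGroup E] [Module ℝ E] [MeasurableSpace E]
  [AddCommGroup F] [Module ℝ F] [MeasurableSpace F] {μ : Measure E} {ν : Measure F}

lemma PrekopaLeindler.prod [SFinite ν] (hμ : PrekopaLeindler μ) (hν : PrekopaLeindler ν) :
    PrekopaLeindler (μ.prod ν) := by
  intro a b ha hb hab f g h hf hg hh hfgh
  rw [lintegral_prod _ hf.aemeasurable, lintegral_prod _ hg.aemeasurable,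
    lintegral_prod _ hh.aemeasurable]
  refine hμ ha hb hab hf.lintegral_prod_right' hg.lintegral_prod_right' hh.lintegral_prod_right'
    fun s t ↦ hν ha hb hab (hf.comp measurable_prodMk_left) (hg.comp measurable_prodMk_left)
      (hh.comp measurable_prodMk_left) fun x y ↦ hfgh (s, x) (t, y)

lemma PrekopaLeindler.map (hμ : PrekopaLeindler μ) {T : E →ₗ[ℝ] F} (hT : Measurable T) :
    PrekopaLeindler (μ.map T) := by
  intro a b ha hb hab f g h hf hg hh hfgh
  rw [lintegral_map hf hT, lintegral_map hg hT, lintegral_map hh hT]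
  refine hμ ha hb hab (hf.comp hT) (hg.comp hT) (hh.comp hT) fun x y ↦ ?_
  simpa using hfgh (T x) (T y)

lemma PrekopaLeindler.rpow_mul_rpow_le (hμ : PrekopaLeindler μ) {a b : ℝ} (ha : 0 < a)
    (hb : 0 < b) (hab : a + b = 1) {A B C : Set E} (hA : MeasurableSet A) (hB : MeasurableSet B)
    (hC : MeasurableSet C) (hABC : ∀ x ∈ A, ∀ y ∈ B, a • x + b • y ∈ C) :
    μ A ^ a * μ B ^ b ≤ μ C := by
  have hind : ∀ x y, A.indicator 1 x ^ a * B.indicator 1 y ^ b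
      ≤ C.indicator (1 : E → ℝ≥0∞) (a • x + b • y) := by
    intro x y
    by_cases hx : x ∈ A
    · by_cases hy : y ∈ B
      · simp [hx, hy, hABC x hx y hy]
      · simp [hy, hb]
    · simp [hx, ha]
  simpa only [lintegral_indicator_one hA, lintegral_indicator_one hB, lintegral_indicator_one hC]
    using hμ ha hb hab (measurable_one.indicator hA) (measurable_one.indicator hB)
      (measurable_one.indicator hC) hind

end Constructions

lemma measurePreserving_finCons (n : ℕ) :
    MeasurePreserving (Fin.consEquivL ℝ fun _ : Fin (n + 1) ↦ ℝ) := by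
  convert (volume_preserving_piFinSuccAbove (fun _ : Fin (n + 1) ↦ ℝ) 0).symm
  ext p : 1
  simp [MeasurableEquiv.piFinSuccAbove, Fin.insertNthEquiv, Fin.insertNth_zero', Fin.consEquivL]
  rfl

lemma prekopaLeindler_pi (n : ℕ) : PrekopaLeindler (volume : Measure (Fin n → ℝ)) := by
  induction n with
  | zero =>
    intro a b _ _ _ f g h _ _ _ hfgh
    simpa [volume_pi, Measure.pi_of_empty (x := 0)] using hfgh 0 0
  | succ n ih =>
    rw [← (measurePreserving_finCons n).map_eq, Measure.volume_eq_prod]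
    exact (prekopaLeindler_real.prod ih).map
      (T := (Fin.consEquivL ℝ fun _ : Fin (n + 1) ↦ ℝ).toLinearMap)
      (measurePreserving_finCons n).measurable

end PrekopaLeindler

section WeightedPoincare

/-- The Poincaré inequality with constant `C` for the weight `ρ` on the interval from `a` to `b`.
Both sides are multiplied by the total mass `∫ ρ`, so that the inequality passes to limits of
weights without a lower bound on the mass. -/
def WeightedPoincare (ρ : ℝ → ℝ) (a b C : ℝ) : Prop :=
  ∀ ⦃φ φ' : ℝ → ℝ⦄, (∀ x, HasDerivAt φ (φ' x) x) → Continuous φ' →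
    (∫ x in a..b, ρ x) * (∫ x in a..b, φ x ^ 2 * ρ x) - (∫ x in a..b, φ x * ρ x) ^ 2 ≤
      C * ((∫ x in a..b, ρ x) * ∫ x in a..b, φ' x ^ 2 * ρ x)

variable {a b : ℝ}

lemma continuous_of_forall_hasDerivAt {f f' : ℝ → ℝ} (hf : ∀ x, HasDerivAt f (f' x) x) :
    Continuous f :=
  continuous_iff_continuousAt.2 fun x ↦ (hf x).continuousAt

lemma hasDerivAt_integral_of_continuous {f : ℝ → ℝ} (hf : Continuous f) (a s : ℝ) :
    HasDerivAt (fun s ↦ ∫ x in a..s, f x) (f s) s :=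
  intervalIntegral.integral_hasDerivAt_right (hf.intervalIntegrable _ _)
    (hf.stronglyMeasurableAtFilter _ _) hf.continuousAt

lemma WeightedPoincare.of_tendsto {ρ : ℝ → ℝ} {C : ℝ} {ρₙ : ℕ → ℝ → ℝ} {aₙ bₙ : ℕ → ℝ}
    (hpoincare : ∀ n, WeightedPoincare (ρₙ n) (aₙ n) (bₙ n) C)
    (hlim : ∀ ψ : ℝ → ℝ, Continuous ψ → Tendsto (fun n ↦ ∫ x in aₙ n..bₙ n, ψ x * ρₙ n x) atTop
      (𝓝 (∫ x in a..b, ψ x * ρ x))) : WeightedPoincare ρ a b C := by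
  intro φ φ' hφ hφ'
  have hφ_cont := continuous_of_forall_hasDerivAt hφ
  have hmass := hlim (fun _ ↦ 1) continuous_const
  simp only [one_mul] at hmass
  exact le_of_tendsto_of_tendsto'
    ((hmass.mul (hlim _ (hφ_cont.pow 2))).sub ((hlim φ hφ_cont).pow 2))
    ((hmass.mul (hlim _ (hφ'.pow 2))).const_mul C) fun n ↦ hpoincare n hφ hφ'

lemma weightedPoincare_of_centered {ρ : ℝ → ℝ} {C : ℝ} (hρ : Continuous ρ)
    (hmass : 0 < ∫ x in a..b, ρ x)
    (hcentered : ∀ ⦃φ φ' : ℝ → ℝ⦄, (∀ x, HasDerivAt φ (φ' x) x) → Continuous φ' →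
      ∫ x in a..b, φ x * ρ x = 0 → ∫ x in a..b, φ x ^ 2 * ρ x ≤ C * ∫ x in a..b, φ' x ^ 2 * ρ x) :
    WeightedPoincare ρ a b C := by
  intro φ φ' hφ hφ'
  have hφ_cont := continuous_of_forall_hasDerivAt hφ
  have hii : ∀ {ψ : ℝ → ℝ}, Continuous ψ → IntervalIntegrable ψ volume a b :=
    fun hψ ↦ hψ.intervalIntegrable a b
  set M := ∫ x in a..b, ρ x
  set c := (∫ x in a..b, φ x * ρ x) / M with hc
  have hmean : ∫ x in a..b, φ x * ρ x = c * M := by rw [hc, div_mul_cancel₀ _ hmass.ne']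
  have hzero : ∫ x in a..b, (φ x - c) * ρ x = 0 := by
    simp only [sub_mul]
    rw [intervalIntegral.integral_sub (hii (by fun_prop)) (hii (by fun_prop)),
      intervalIntegral.integral_const_mul, hmean, sub_self]
  have hsq : ∫ x in a..b, (φ x - c) ^ 2 * ρ x = (∫ x in a..b, φ x ^ 2 * ρ x) - c ^ 2 * M := by
    have hexpand : ∀ x, (φ x - c) ^ 2 * ρ x = φ x ^ 2 * ρ x - 2 * c * (φ x * ρ x) + c ^ 2 * ρ x :=
      fun x ↦ by ring
    simp only [hexpand]
    rw [intervalIntegral.integral_add (hii (by fun_prop)) (hii (by fun_prop)),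
      intervalIntegral.integral_sub (hii (by fun_prop)) (hii (by fun_prop)),
      intervalIntegral.integral_const_mul, intervalIntegral.integral_const_mul, hmean]
    ring
  have hle := hcentered (fun x ↦ (hφ x).sub_const c) hφ' hzero
  rw [hsq] at hle
  rw [hmean]
  linarith [mul_le_mul_of_nonneg_left hle hmass.le]

-- With `H` a primitive of `φ ρ` vanishing at both ends, the function `2 φ H - p H ^ 2` also
-- vanishes there, and `φ ^ 2 ρ - φ' ^ 2 ρ / μ ^ 2` is at most its derivative.
lemma integral_sq_mul_le_of_riccati (hab : a ≤ b) {μ : ℝ} (hμ : μ ≠ 0) {ρ p p' : ℝ → ℝ}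
    (hρ : Continuous ρ) (hρ_pos : ∀ x ∈ Icc a b, 0 < ρ x)
    (hp : ∀ x ∈ Icc a b, HasDerivAt p (p' x) x) (hp' : ContinuousOn p' (Icc a b))
    (hriccati : ∀ x ∈ Icc a b, p' x + p x ^ 2 * ρ x + μ ^ 2 / ρ x ≤ 0)
    {φ φ' : ℝ → ℝ} (hφ : ∀ x, HasDerivAt φ (φ' x) x) (hφ' : Continuous φ')
    (hmean : ∫ x in a..b, φ x * ρ x = 0) :
    ∫ x in a..b, φ x ^ 2 * ρ x ≤ 1 / μ ^ 2 * ∫ x in a..b, φ' x ^ 2 * ρ x := by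
  have hφ_cont := continuous_of_forall_hasDerivAt hφ
  have hp_cont : ContinuousOn p (Icc a b) := HasDerivAt.continuousOn hp
  set H : ℝ → ℝ := fun s ↦ ∫ x in a..s, φ x * ρ x
  have hH : ∀ s, HasDerivAt H (φ s * ρ s) s :=
    hasDerivAt_integral_of_continuous (hφ_cont.mul hρ) a
  have hHa : H a = 0 := intervalIntegral.integral_same
  set P' : ℝ → ℝ := fun s ↦ 2 * (φ' s * H s + φ s * (φ s * ρ s)) -
    (p' s * H s ^ 2 + p s * (2 * H s * (φ s * ρ s)))
  have hP : ∀ s ∈ Icc a b, HasDerivAt (fun s ↦ 2 * (φ s * H s) - p s * H s ^ 2) (P' s) s :=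
    fun s hs ↦ ((((hφ s).mul (hH s)).const_mul 2).sub ((hp s hs).mul ((hH s).pow 2))).congr_deriv
      (by simp [P'])
  have hP' : IntervalIntegrable P' volume a b :=
    ContinuousOn.intervalIntegrable (by rw [uIcc_of_le hab]; fun_prop)
  have hint : ∫ s in a..b, P' s = 0 := by
    rw [intervalIntegral.integral_eq_sub_of_hasDerivAt (by rwa [uIcc_of_le hab]) hP']
    simp [hHa, show H b = 0 from hmean]
  have hle : ∀ s ∈ Icc a b, φ s ^ 2 * ρ s - 1 / μ ^ 2 * (φ' s ^ 2 * ρ s) ≤ P' s := by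
    intro s hs
    have hρs := hρ_pos s hs
    have hsquares : P' s - (φ s ^ 2 * ρ s - 1 / μ ^ 2 * (φ' s ^ 2 * ρ s)) =
        ρ s * (φ s - p s * H s) ^ 2 + ρ s * (φ' s / μ + μ * H s / ρ s) ^ 2 -
          H s ^ 2 * (p' s + p s ^ 2 * ρ s + μ ^ 2 / ρ s) := by
      simp only [P']
      field_simp
      ring
    nlinarith [mul_nonneg hρs.le (sq_nonneg (φ s - p s * H s)),
      mul_nonneg hρs.le (sq_nonneg (φ' s / μ + μ * H s / ρ s)),
      mul_nonneg (sq_nonneg (H s)) (neg_nonneg.2 (hriccati s hs))]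
  have hφρ : IntervalIntegrable (fun s ↦ φ s ^ 2 * ρ s) volume a b :=
    Continuous.intervalIntegrable (by fun_prop) _ _
  have hφ'ρ : IntervalIntegrable (fun s ↦ 1 / μ ^ 2 * (φ' s ^ 2 * ρ s)) volume a b :=
    Continuous.intervalIntegrable (by fun_prop) _ _
  have hmono := intervalIntegral.integral_mono_on hab (hφρ.sub hφ'ρ) hP' hle
  rw [intervalIntegral.integral_sub hφρ hφ'ρ, intervalIntegral.integral_const_mul, hint] at hmono
  linarith

lemma hasDerivAt_mul_tan {μ m s : ℝ} (hcos : Real.cos (μ * (s - m)) ≠ 0) :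
    HasDerivAt (fun s ↦ Real.tan (μ * (s - m))) (μ * (1 + Real.tan (μ * (s - m)) ^ 2)) s := by
  have hlin : HasDerivAt (fun s ↦ μ * (s - m)) μ s := by
    simpa using ((hasDerivAt_id s).sub_const m).const_mul μ
  refine ((Real.hasDerivAt_tan hcos).comp s hlin).congr_deriv ?_
  rw [Real.tan_eq_sin_div_cos]
  field_simp
  rw [Real.cos_sq_add_sin_sq, mul_one]

-- For `ρ = exp (-V)` the logarithmic derivative of `cos (μ (x - m)) / √ρ`, divided by `ρ`, solves
-- the Riccati inequality; `m` is the midpoint, so that the cosine has no zero on `[a, b]`.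
lemma weightedPoincare_exp_neg_of_deriv2_nonneg (hab : a < b) {μ : ℝ} (hμ : 0 < μ)
    (hμab : μ * (b - a) < Real.pi) {V V' V'' : ℝ → ℝ} (hV : ∀ x, HasDerivAt V (V' x) x)
    (hV' : ∀ x, HasDerivAt V' (V'' x) x) (hV'' : Continuous V'')
    (hconv : ∀ x ∈ Icc a b, 0 ≤ V'' x) :
    WeightedPoincare (fun x ↦ Real.exp (-V x)) a b (1 / μ ^ 2) := by
  have hV_cont := continuous_of_forall_hasDerivAt hV
  have hV'_cont := continuous_of_forall_hasDerivAt hV'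
  set T : ℝ → ℝ := fun s ↦ Real.tan (μ * (s - (a + b) / 2))
  have hT : ∀ s ∈ Icc a b, HasDerivAt T (μ * (1 + T s ^ 2)) s := fun s hs ↦
    hasDerivAt_mul_tan (Real.cos_pos_of_mem_Ioo
      ⟨by nlinarith [hs.1, hs.2], by nlinarith [hs.1, hs.2]⟩).ne'
  have hT_cont : ContinuousOn T (Icc a b) := HasDerivAt.continuousOn hT
  have hp : ∀ s ∈ Icc a b, HasDerivAt (fun s ↦ (-μ * T s - V' s / 2) * Real.exp (V s))
      ((-μ * (μ * (1 + T s ^ 2)) - V'' s / 2) * Real.exp (V s) +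
        (-μ * T s - V' s / 2) * (Real.exp (V s) * V' s)) s := fun s hs ↦
    (((hT s hs).const_mul (-μ)).sub ((hV' s).div_const 2)).mul (hV s).exp
  refine weightedPoincare_of_centered (by fun_prop)
    (intervalIntegral.intervalIntegral_pos_of_pos
      (Continuous.intervalIntegrable (by fun_prop) _ _) (fun x ↦ Real.exp_pos _) hab)
    fun φ φ' hφ hφ' hmean ↦ integral_sq_mul_le_of_riccati hab.le hμ.ne' (by fun_prop)
      (fun x _ ↦ Real.exp_pos _) hp (by fun_prop) (fun s hs ↦ ?_) hφ hφ' hmean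
  have hresidual : ∀ E > 0, (-μ * (μ * (1 + T s ^ 2)) - V'' s / 2) * E +
      (-μ * T s - V' s / 2) * (E * V' s) + ((-μ * T s - V' s / 2) * E) ^ 2 * E⁻¹ + μ ^ 2 / E⁻¹ =
        -(V'' s / 2 + V' s ^ 2 / 4) * E := by
    intro E hE
    field_simp
    ring
  rw [Real.exp_neg, hresidual _ (Real.exp_pos _), neg_mul, neg_nonpos]
  have hVs := hconv s hs
  positivity

/-- The symmetric second difference quotient of `F` with step `δ`. Applied to a second primitive of
a continuous function `V`, it is a `C²` approximation of `V`. -/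
noncomputable def secondDifference (δ : ℝ) (F : ℝ → ℝ) (s : ℝ) : ℝ :=
  (F (s + δ) - 2 * F s + F (s - δ)) / δ ^ 2

lemma hasDerivAt_secondDifference {F F' : ℝ → ℝ} (hF : ∀ s, HasDerivAt F (F' s) s) (δ s : ℝ) :
    HasDerivAt (secondDifference δ F) (secondDifference δ F' s) s :=
  ((((hF (s + δ)).comp_add_const s δ).sub ((hF s).const_mul 2)).add
    ((hF (s - δ)).comp_sub_const s δ)).div_const _

lemma secondDifference_nonneg {S : Set ℝ} {V : ℝ → ℝ} (hV : ConvexOn ℝ S V) {δ s : ℝ}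
    (hl : s - δ ∈ S) (hr : s + δ ∈ S) : 0 ≤ secondDifference δ V s := by
  have hmid := hV.2 hl hr (by norm_num : (0 : ℝ) ≤ 1 / 2) (by norm_num : (0 : ℝ) ≤ 1 / 2)
    (by norm_num)
  rw [show (1 / 2 : ℝ) • (s - δ) + (1 / 2 : ℝ) • (s + δ) = s by simp; ring] at hmid
  simp only [smul_eq_mul] at hmid
  exact div_nonneg (by linarith) (sq_nonneg δ)

lemma exists_secondDifference_eq {F F' V : ℝ → ℝ} (hF : ∀ s, HasDerivAt F (F' s) s)
    (hF' : ∀ s, HasDerivAt F' (V s) s) {δ : ℝ} (hδ : 0 < δ) (s : ℝ) :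
    ∃ ξ ∈ Ioo (s - δ) (s + δ), secondDifference δ F s = V ξ := by
  have hG : ∀ u, HasDerivAt (fun u ↦ F (u + δ) - F u) (F' (u + δ) - F' u) u := fun u ↦
    ((hF (u + δ)).comp_add_const u δ).sub (hF u)
  obtain ⟨u, hu, hslope⟩ := exists_hasDerivAt_eq_slope _ _ (sub_lt_self s hδ)
    (continuous_of_forall_hasDerivAt hG).continuousOn fun u _ ↦ hG u
  obtain ⟨ξ, hξ, hslope'⟩ := exists_hasDerivAt_eq_slope _ _ (lt_add_of_pos_right u hδ)
    (continuous_of_forall_hasDerivAt hF').continuousOn fun u _ ↦ hF' u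
  refine ⟨ξ, ⟨hu.1.trans hξ.1, by linarith [hξ.2, hu.2]⟩, ?_⟩
  rw [hslope', hslope, secondDifference]
  simp only [sub_add_cancel, sub_sub_cancel, add_sub_cancel_left]
  field_simp
  ring

lemma weightedPoincare_exp_neg_of_convexOn (hab : a < b) {μ η : ℝ} (hμ : 0 < μ)
    (hμab : μ * (b - a) < Real.pi) (hη : 0 < η) {V : ℝ → ℝ} (hV : Continuous V)
    (hconv : ConvexOn ℝ (Icc (a - η) (b + η)) V) :
    WeightedPoincare (fun x ↦ Real.exp (-V x)) a b (1 / μ ^ 2) := by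
  obtain ⟨F', hF'⟩ : ∃ F' : ℝ → ℝ, ∀ s, HasDerivAt F' (V s) s :=
    ⟨_, hasDerivAt_integral_of_continuous hV 0⟩
  obtain ⟨F, hF⟩ : ∃ F : ℝ → ℝ, ∀ s, HasDerivAt F (F' s) s :=
    ⟨_, hasDerivAt_integral_of_continuous (continuous_of_forall_hasDerivAt hF') 0⟩
  obtain ⟨δ, -, hδ, hδ_lim⟩ := exists_seq_strictAnti_tendsto' hη
  choose ξ hξ hξ_eq using fun n s ↦ exists_secondDifference_eq hF hF' (hδ n).1 s
  refine .of_tendsto (ρₙ := fun n x ↦ Real.exp (-secondDifference (δ n) F x)) (aₙ := fun _ ↦ a)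
    (bₙ := fun _ ↦ b) (fun n ↦ ?_) fun ψ hψ ↦ ?_
  · refine weightedPoincare_exp_neg_of_deriv2_nonneg hab hμ hμab (hasDerivAt_secondDifference hF _)
      (hasDerivAt_secondDifference hF' _) (by unfold secondDifference; fun_prop) fun x hx ↦
        secondDifference_nonneg hconv ⟨?_, ?_⟩ ⟨?_, ?_⟩ <;>
      linarith [hx.1, hx.2, (hδ n).1, (hδ n).2]
  · simp only [hξ_eq]
    obtain ⟨B, hB⟩ := (isCompact_Icc (a := a - η) (b := b + η)).bddBelow_image hV.continuousOn
    refine intervalIntegral.tendsto_integral_filter_of_dominated_convergence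
      (fun x ↦ |ψ x| * Real.exp (-B)) (.of_forall fun n ↦ ?_) (.of_forall fun n ↦ .of_forall ?_)
      (Continuous.intervalIntegrable (by fun_prop) _ _) (.of_forall fun x _ ↦ ?_)
    · simp only [← hξ_eq]
      have hcont := continuous_of_forall_hasDerivAt (hasDerivAt_secondDifference hF (δ n))
      exact Continuous.aestronglyMeasurable (by fun_prop)
    · intro x hx
      rw [uIoc_of_le hab.le] at hx
      have hξx : ξ n x ∈ Icc (a - η) (b + η) := by
        constructor <;> linarith [hx.1, hx.2, (hξ n x).1, (hξ n x).2, (hδ n).2]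
      rw [norm_mul, Real.norm_eq_abs, Real.norm_eq_abs, Real.abs_exp]
      gcongr
      exact hB ⟨_, hξx, rfl⟩
    · have hξ_lim : Tendsto (fun n ↦ ξ n x) atTop (𝓝 x) :=
        tendsto_of_tendsto_of_tendsto_of_le_of_le (by simpa using hδ_lim.const_sub x)
          (by simpa using hδ_lim.const_add x) (fun n ↦ (hξ n x).1.le) fun n ↦ (hξ n x).2.le
      exact ((Real.continuous_exp.tendsto _).comp
        ((hV.tendsto x).comp hξ_lim).neg).const_mul _

lemma weightedPoincare_of_concaveOn_log_of_shrink {ρ : ℝ → ℝ} (hρ_pos : ∀ x ∈ Ioo a b, 0 < ρ x)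
    (hρ_log : ConcaveOn ℝ (Ioo a b) fun x ↦ Real.log (ρ x)) {ε : ℝ} (hε : 0 < ε)
    (hεab : a + ε < b - ε) :
    WeightedPoincare ρ (a + ε) (b - ε) (((b - a) / Real.pi) ^ 2) := by
  have hle : a + ε / 2 ≤ b - ε / 2 := by linarith
  have hsub : Icc (a + ε / 2) (b - ε / 2) ⊆ Ioo a b := fun x hx ↦
    ⟨by linarith [hx.1], by linarith [hx.2]⟩
  set V : ℝ → ℝ := IccExtend hle ((Icc _ _).domRestrict fun x ↦ -Real.log (ρ x))
  have hV_eq : ∀ x ∈ Icc (a + ε / 2) (b - ε / 2), V x = -Real.log (ρ x) :=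
    fun x hx ↦ IccExtend_of_mem _ _ hx
  have hV : Continuous V :=
    ((hρ_log.continuousOn isOpen_Ioo).neg.mono hsub).domRestrict.Icc_extend'
  have hV_conv : ConvexOn ℝ (Icc (a + ε - ε / 2) (b - ε + ε / 2)) V := by
    rw [show a + ε - ε / 2 = a + ε / 2 by ring, show b - ε + ε / 2 = b - ε / 2 by ring]
    exact (hρ_log.neg.subset hsub (convex_Icc _ _)).congr fun x hx ↦ (hV_eq x hx).symm
  have hexp : ∀ x ∈ uIcc (a + ε) (b - ε), Real.exp (-V x) = ρ x := by
    intro x hx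
    rw [uIcc_of_le hεab.le] at hx
    have hx' : x ∈ Icc (a + ε / 2) (b - ε / 2) := ⟨by linarith [hx.1], by linarith [hx.2]⟩
    rw [hV_eq x hx', neg_neg, Real.exp_log (hρ_pos x (hsub hx'))]
  have hba : 0 < b - a := by linarith
  have hμ : Real.pi / (b - a) * (b - ε - (a + ε)) < Real.pi := by
    rw [div_mul_eq_mul_div, div_lt_iff₀ hba]
    exact mul_lt_mul_of_pos_left (by linarith) Real.pi_pos
  have hpoincare := weightedPoincare_exp_neg_of_convexOn hεab (div_pos Real.pi_pos hba) hμ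
    (half_pos hε) hV hV_conv
  intro φ φ' hφ hφ'
  have hψ : ∀ ψ : ℝ → ℝ, ∫ x in a + ε..b - ε, ψ x * Real.exp (-V x) =
      ∫ x in a + ε..b - ε, ψ x * ρ x := fun ψ ↦
    intervalIntegral.integral_congr fun x hx ↦ by simp only [hexp x hx]
  have hφ_le := hpoincare hφ hφ'
  rwa [intervalIntegral.integral_congr hexp, hψ φ, hψ fun x ↦ φ x ^ 2, hψ fun x ↦ φ' x ^ 2,
    one_div, ← inv_pow, inv_div] at hφ_le

theorem weightedPoincare_of_concaveOn_log (hab : a < b) {ρ : ℝ → ℝ}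
    (hρ_pos : ∀ x ∈ Ioo a b, 0 < ρ x) (hρ_log : ConcaveOn ℝ (Ioo a b) fun x ↦ Real.log (ρ x))
    (hρ : IntervalIntegrable ρ volume a b) :
    WeightedPoincare ρ a b (((b - a) / Real.pi) ^ 2) := by
  obtain ⟨ε, -, hε, hε_lim⟩ := exists_seq_strictAnti_tendsto' (half_pos (sub_pos.2 hab))
  have hεab : ∀ n, a + ε n < b - ε n := fun n ↦ by linarith [(hε n).2]
  refine .of_tendsto (fun n ↦ weightedPoincare_of_concaveOn_log_of_shrink hρ_pos hρ_log (hε n).1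
    (hεab n)) fun ψ hψ ↦ ?_
  have hψρ : IntegrableOn (fun x ↦ ψ x * ρ x) (Ioo a b) :=
    (intervalIntegrable_iff_integrableOn_Ioo_of_le hab.le).1
      (hρ.continuousOn_mul hψ.continuousOn)
  have hcover : AECover (volume.restrict (Ioo a b)) atTop fun n ↦ Ioc (a + ε n) (b - ε n) :=
    aecover_Ioo_of_Ioc (by simpa using hε_lim.const_add a) (by simpa using hε_lim.const_sub b)
  rw [intervalIntegral.integral_of_le hab.le, integral_Ioc_eq_integral_Ioo]
  refine (hcover.integral_tendsto_of_countably_generated hψρ).congr fun n ↦ ?_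
  rw [intervalIntegral.integral_of_le (hεab n).le, Measure.restrict_restrict_of_subset]
  exact fun x hx ↦ ⟨by linarith [hx.1, (hε n).1], by linarith [hx.2, (hε n).1]⟩

end WeightedPoincare

section Ridge

lemma integrableOn_of_isBounded {X G : Type*} [MetricSpace X] [ProperSpace X]
    [MeasurableSpace X] [OpensMeasurableSpace X] {μ : Measure X} [IsFiniteMeasureOnCompacts μ]
    [NormedAddCommGroup G] {f : X → G} (hf : Continuous f) {K : Set X}
    (hK : Bornology.IsBounded K) : IntegrableOn f K μ :=
  (hf.continuousOn.integrableOn_compact hK.isCompact_closure).mono_set subset_closure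

lemma exists_eq_Ioo_of_convex {I : Set ℝ} (hconv : Convex ℝ I) (hopen : IsOpen I)
    (hbdd : Bornology.IsBounded I) (hne : I.Nonempty) : ∃ a b, a < b ∧ I = Ioo a b := by
  have hI : I = Ioo (sInf I) (sSup I) := by
    refine Subset.antisymm (fun x hx ↦ ⟨?_, ?_⟩)
      (IsConnected.Ioo_csInf_csSup_subset ⟨hne, hconv.isPreconnected⟩ hbdd.bddBelow hbdd.bddAbove)
    · obtain ⟨y, hy, hyx⟩ := Eventually.exists_lt (hopen.eventually_mem hx)
      exact (csInf_le hbdd.bddBelow hyx).trans_lt hy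
    · obtain ⟨y, hy, hyx⟩ := Eventually.exists_gt (hopen.eventually_mem hx)
      exact hy.trans_le (le_csSup hbdd.bddAbove hyx)
  exact ⟨_, _, nonempty_Ioo.1 (hI ▸ hne), hI⟩

section Sections

variable {F : Type*} [MeasureSpace F] {K : Set (ℝ × F)}

/-- The volume of the section of `K ⊆ ℝ × F` over `s`. -/
noncomputable def sectionVolume (K : Set (ℝ × F)) (s : ℝ) : ℝ :=
  volume.real (Prod.mk s ⁻¹' K)

lemma sectionVolume_eq_zero {s : ℝ} (hs : s ∉ Prod.fst '' K) : sectionVolume K s = 0 := by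
  have hempty : Prod.mk s ⁻¹' K = ∅ :=
    eq_empty_of_forall_notMem fun y hy ↦ hs ⟨(s, y), hy, rfl⟩
  simp [sectionVolume, hempty]

lemma integral_indicator_comp_fst (hK : MeasurableSet K) (ψ : ℝ → ℝ) (s : ℝ) :
    ∫ y, K.indicator (fun p ↦ ψ p.1) (s, y) = ψ s * sectionVolume K s := by
  have hind : (fun y ↦ K.indicator (fun p ↦ ψ p.1) (s, y)) =
      (Prod.mk s ⁻¹' K).indicator fun _ ↦ ψ s := rfl
  rw [hind, integral_indicator (measurable_prodMk_left hK), setIntegral_const, smul_eq_mul,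
    mul_comm, sectionVolume]

variable [SFinite (volume : Measure F)]

lemma integrable_mul_sectionVolume (hK : MeasurableSet K) {ψ : ℝ → ℝ}
    (hψ : IntegrableOn (fun p : ℝ × F ↦ ψ p.1) K) :
    Integrable fun s ↦ ψ s * sectionVolume K s := by
  simpa only [integral_indicator_comp_fst hK] using
    (hψ.integrable_indicator hK).integral_prod_left

lemma setIntegral_comp_fst (hK : MeasurableSet K) {ψ : ℝ → ℝ}
    (hψ : IntegrableOn (fun p : ℝ × F ↦ ψ p.1) K) :
    ∫ p in K, ψ p.1 = ∫ s in Prod.fst '' K, ψ s * sectionVolume K s := by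
  have hsupp : ∫ s in Prod.fst '' K, ψ s * sectionVolume K s = ∫ s, ψ s * sectionVolume K s :=
    setIntegral_eq_integral_of_forall_compl_eq_zero fun s hs ↦ by
      rw [sectionVolume_eq_zero hs, mul_zero]
  rw [hsupp, ← integral_indicator hK, Measure.volume_eq_prod,
    integral_prod _ (hψ.integrable_indicator hK)]
  simp only [integral_indicator_comp_fst hK]

end Sections

section ConvexSections

variable {F : Type*} [NormedAddCommGroup F] [NormedSpace ℝ F] [FiniteDimensional ℝ F]
  [MeasureSpace F] [(volume : Measure F).IsAddHaarMeasure] {K : Set (ℝ × F)}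

lemma volume_section_ne_top (hK : Bornology.IsBounded K) (s : ℝ) :
    volume (Prod.mk s ⁻¹' K) ≠ ∞ := by
  have hsub : Prod.mk s ⁻¹' K ⊆ Prod.snd '' K := fun y hy ↦ ⟨(s, y), hy, rfl⟩
  exact (hK.image_snd.subset hsub).measure_lt_top.ne

lemma sectionVolume_pos (hopen : IsOpen K) (hbdd : Bornology.IsBounded K) {s : ℝ}
    (hs : s ∈ Prod.fst '' K) : 0 < sectionVolume K s := by
  obtain ⟨⟨_, y⟩, hy, rfl⟩ := hs
  exact ENNReal.toReal_pos ((hopen.preimage (by fun_prop)).measure_pos volume ⟨y, hy⟩).ne'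
    (volume_section_ne_top hbdd _)

variable [BorelSpace F]

lemma concaveOn_log_sectionVolume (hF : PrekopaLeindler (volume : Measure F))
    (hconv : Convex ℝ K) (hopen : IsOpen K) (hbdd : Bornology.IsBounded K) :
    ConcaveOn ℝ (Prod.fst '' K) fun s ↦ Real.log (sectionVolume K s) := by
  rw [concaveOn_iff_forall_pos]
  refine ⟨hconv.is_linear_image (LinearMap.fst ℝ ℝ F).isLinear, fun s hs t ht a b ha hb hab ↦ ?_⟩
  have hs0 := sectionVolume_pos hopen hbdd hs
  have ht0 := sectionVolume_pos hopen hbdd ht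
  have hmeas : ∀ r : ℝ, MeasurableSet (Prod.mk r ⁻¹' K) := fun r ↦
    measurable_prodMk_left hopen.measurableSet
  have hbm := hF.rpow_mul_rpow_le ha hb hab (hmeas s) (hmeas t) (hmeas (a • s + b • t))
    fun x hx y hy ↦ hconv hx hy ha.le hb.le hab
  have hbm_real : sectionVolume K s ^ a * sectionVolume K t ^ b ≤
      sectionVolume K (a • s + b • t) := by
    simpa only [sectionVolume, measureReal_def, ENNReal.toReal_mul, ← ENNReal.toReal_rpow] using
      ENNReal.toReal_mono (volume_section_ne_top hbdd _) hbm
  calc a • Real.log (sectionVolume K s) + b • Real.log (sectionVolume K t)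
      = Real.log (sectionVolume K s ^ a * sectionVolume K t ^ b) := by
        rw [Real.log_mul (by positivity) (by positivity), Real.log_rpow hs0, Real.log_rpow ht0,
          smul_eq_mul, smul_eq_mul]
    _ ≤ Real.log (sectionVolume K (a • s + b • t)) := Real.log_le_log (by positivity) hbm_real

lemma poincare_comp_fst (hF : PrekopaLeindler (volume : Measure F)) (hconv : Convex ℝ K)
    (hopen : IsOpen K) (hbdd : Bornology.IsBounded K) {a b : ℝ} (hab : a < b)
    (hfst : Prod.fst '' K = Ioo a b) {φ φ' : ℝ → ℝ} (hφ : ∀ x, HasDerivAt φ (φ' x) x)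
    (hφ' : Continuous φ') :
    volume.real K * (∫ p in K, φ p.1 ^ 2) - (∫ p in K, φ p.1) ^ 2 ≤
      ((b - a) / Real.pi) ^ 2 * (volume.real K * ∫ p in K, φ' p.1 ^ 2) := by
  have hφ_cont := continuous_of_forall_hasDerivAt hφ
  have hint : ∀ ψ : ℝ → ℝ, Continuous ψ →
      ∫ p in K, ψ p.1 = ∫ s in a..b, ψ s * sectionVolume K s := fun ψ hψ ↦ by
    rw [setIntegral_comp_fst hopen.measurableSet
      (integrableOn_of_isBounded (hψ.comp continuous_fst) hbdd), hfst,
      intervalIntegral.integral_of_le hab.le, integral_Ioc_eq_integral_Ioo]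
  have hvol : volume.real K = ∫ s in a..b, sectionVolume K s := by
    simpa using hint (fun _ ↦ 1) continuous_const
  have hρ : Integrable (sectionVolume K) := by
    simpa using integrable_mul_sectionVolume (ψ := fun _ ↦ 1) hopen.measurableSet
      (integrableOn_of_isBounded continuous_const hbdd)
  rw [hvol, hint φ hφ_cont, hint (fun s ↦ φ s ^ 2) (by fun_prop),
    hint (fun s ↦ φ' s ^ 2) (by fun_prop)]
  exact weightedPoincare_of_concaveOn_log hab
    (fun s hs ↦ sectionVolume_pos hopen hbdd (hfst ▸ hs))
    (hfst ▸ concaveOn_log_sectionVolume hF hconv hopen hbdd) hρ.intervalIntegrable hφ hφ'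

end ConvexSections

variable {E : Type*} [NormedAddCommGroup E] [InnerProductSpace ℝ E] [FiniteDimensional ℝ E]

lemma exists_orthonormalBasis_apply_zero {e : E} (he : ‖e‖ = 1) {n : ℕ}
    (hn : Module.finrank ℝ E = n + 1) : ∃ b : OrthonormalBasis (Fin (n + 1)) ℝ E, b 0 = e := by
  have horth : Orthonormal ℝ (({0} : Set (Fin (n + 1))).domRestrict fun _ ↦ e) :=
    ⟨fun _ ↦ he, fun i j hij ↦ (hij (Subsingleton.elim i j)).elim⟩
  obtain ⟨b, hb⟩ := horth.exists_orthonormalBasis_extension_of_card_eq (by simpa using hn)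
  exact ⟨b, hb 0 rfl⟩

variable [MeasurableSpace E] [BorelSpace E]

lemma exists_measurePreserving_inner_eq_fst {e : E} (he : ‖e‖ = 1) :
    ∃ (n : ℕ) (Ψ : (ℝ × (Fin n → ℝ)) ≃L[ℝ] E),
      MeasurePreserving Ψ ∧ ∀ p, inner ℝ e (Ψ p) = p.1 := by
  have : Nontrivial E := ⟨e, 0, by simp [← norm_ne_zero_iff, he]⟩
  obtain ⟨n, hn⟩ := Nat.exists_eq_succ_of_ne_zero (Module.finrank_pos (R := ℝ) (M := E)).ne'
  obtain ⟨b, rfl⟩ := exists_orthonormalBasis_apply_zero he hn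
  refine ⟨n, (Fin.consEquivL ℝ fun _ ↦ ℝ).trans
    ((EuclideanSpace.equiv (Fin (n + 1)) ℝ).symm.trans b.repr.symm.toContinuousLinearEquiv), ?_, ?_⟩
  · exact b.measurePreserving_repr_symm.comp
      ((PiLp.volume_preserving_toLp _).comp (measurePreserving_finCons n))
  · intro p
    rw [← OrthonormalBasis.repr_apply_apply]
    simp [Fin.consEquivL]

theorem poincare_comp_inner {K : Set E} (hconv : Convex ℝ K) (hopen : IsOpen K)
    (hbdd : Bornology.IsBounded K) (hne : K.Nonempty) {e : E} (he : ‖e‖ = 1)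
    {φ φ' : ℝ → ℝ} (hφ : ∀ x, HasDerivAt φ (φ' x) x) (hφ' : Continuous φ') :
    volume.real K * (∫ x in K, φ (inner ℝ e x) ^ 2) - (∫ x in K, φ (inner ℝ e x)) ^ 2 ≤
      (Metric.diam K / Real.pi) ^ 2 * (volume.real K * ∫ x in K, φ' (inner ℝ e x) ^ 2) := by
  obtain ⟨n, Ψ, hΨ, hinner⟩ := exists_measurePreserving_inner_eq_fst he
  have hΨ_emb : MeasurableEmbedding Ψ := Ψ.toHomeomorph.measurableEmbedding
  have hlip : LipschitzWith 1 (innerSL ℝ e) := by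
    have hnorm : ‖innerSL ℝ e‖₊ = 1 := NNReal.eq ((innerSL_apply_norm ℝ e).trans he)
    exact hnorm ▸ (innerSL ℝ e).lipschitz
  have hfst : Prod.fst '' (Ψ ⁻¹' K) = innerSL ℝ e '' K := by
    rw [← image_preimage_eq K Ψ.surjective, image_image, preimage_image_eq _ Ψ.injective]
    simp only [innerSL_apply_apply, hinner]
  have hopen' : IsOpen (Ψ ⁻¹' K) := hopen.preimage Ψ.continuous
  have hconv' : Convex ℝ (Ψ ⁻¹' K) := hconv.linear_preimage Ψ.toLinearMap
  have hbdd' : Bornology.IsBounded (Ψ ⁻¹' K) := by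
    rw [← Ψ.image_symm_eq_preimage]
    exact Ψ.symm.lipschitz.isBounded_image hbdd
  have hconv_fst : Convex ℝ (Prod.fst '' (Ψ ⁻¹' K)) :=
    hconv'.is_linear_image (LinearMap.fst ℝ ℝ _).isLinear
  obtain ⟨a, b, hab, hIoo⟩ := exists_eq_Ioo_of_convex hconv_fst (isOpenMap_fst _ hopen')
    hbdd'.image_fst (hne.preimage Ψ.surjective |>.image _)
  have hlen : b - a ≤ Metric.diam K := by
    have hdiam := hlip.diam_image_le K hbdd
    rwa [← hfst, hIoo, Real.diam_Ioo hab.le, NNReal.coe_one, one_mul] at hdiam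
  have hint : ∀ ψ : ℝ → ℝ, ∫ x in K, ψ (inner ℝ e x) = ∫ p in Ψ ⁻¹' K, ψ p.1 := fun ψ ↦ by
    simp only [← hΨ.setIntegral_preimage_emb hΨ_emb, hinner]
  have hvol : volume.real K = volume.real (Ψ ⁻¹' K) := by
    rw [measureReal_def, measureReal_def,
      hΨ.measure_preimage hopen.measurableSet.nullMeasurableSet]
  rw [hvol, hint φ, hint fun s ↦ φ s ^ 2, hint fun s ↦ φ' s ^ 2]
  refine (poincare_comp_fst (prekopaLeindler_pi n) hconv' hopen' hbdd' hab hIoo hφ hφ').trans ?_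
  have : 0 ≤ (b - a) / Real.pi := div_nonneg (sub_nonneg.2 hab.le) Real.pi_pos.le
  gcongr

end Ridge

section Bisection

/-- The open half-space through `q` on which the affine form `L (x - q)` is positive; the opposite
half-space is `halfSpace (-L) q`. -/
def halfSpace {E : Type*} [NormedAddCommGroup E] [NormedSpace ℝ E] (L : E →L[ℝ] ℝ) (q : E) :
    Set E :=
  {x | 0 < L (x - q)}

/-- The linear form `cos θ ℓ₁ + sin θ ℓ₂` in the pencil spanned by `ℓ₁` and `ℓ₂`. -/
noncomputable def rotatedForm {E : Type*} [NormedAddCommGroup E] [NormedSpace ℝ E]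
    (ℓ₁ ℓ₂ : E →L[ℝ] ℝ) (θ : ℝ) : E →L[ℝ] ℝ :=
  Real.cos θ • ℓ₁ + Real.sin θ • ℓ₂

variable {E : Type*} [NormedAddCommGroup E] [NormedSpace ℝ E]

lemma isOpen_halfSpace (L : E →L[ℝ] ℝ) (q : E) : IsOpen (halfSpace L q) :=
  isOpen_lt continuous_const (by fun_prop)

lemma nonneg_of_mem_closure_halfSpace {L : E →L[ℝ] ℝ} {q x : E} (hx : x ∈ closure (halfSpace L q)) :
    0 ≤ L (x - q) := by
  have hclosed : IsClosed {x | 0 ≤ L (x - q)} := isClosed_le continuous_const (by fun_prop)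
  exact closure_minimal (fun y (hy : 0 < L (y - q)) ↦ hy.le) hclosed hx

lemma convex_halfSpace (L : E →L[ℝ] ℝ) (q : E) : Convex ℝ (halfSpace L q) := by
  simpa [halfSpace] using convex_halfSpace_gt L.toLinearMap.isLinear (L q)

lemma rotatedForm_add_pi (ℓ₁ ℓ₂ : E →L[ℝ] ℝ) (θ : ℝ) :
    rotatedForm ℓ₁ ℓ₂ (θ + Real.pi) = -rotatedForm ℓ₁ ℓ₂ θ := by
  unfold rotatedForm
  rw [Real.cos_add_pi, Real.sin_add_pi]
  module

lemma rotatedForm_apply (ℓ₁ ℓ₂ : E →L[ℝ] ℝ) (θ : ℝ) (x : E) :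
    rotatedForm ℓ₁ ℓ₂ θ x = Real.cos θ * ℓ₁ x + Real.sin θ * ℓ₂ x := rfl

lemma continuous_rotatedForm (ℓ₁ ℓ₂ : E →L[ℝ] ℝ) : Continuous (rotatedForm ℓ₁ ℓ₂) := by
  unfold rotatedForm
  fun_prop

lemma rotatedForm_ne_zero {ℓ₁ ℓ₂ : E →L[ℝ] ℝ} (hℓ : LinearIndependent ℝ ![ℓ₁, ℓ₂]) (θ : ℝ) :
    rotatedForm ℓ₁ ℓ₂ θ ≠ 0 := fun h ↦ by
  obtain ⟨hcos, hsin⟩ := LinearIndependent.pair_iff.1 hℓ _ _ h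
  simpa [hcos, hsin] using Real.cos_sq_add_sin_sq θ

lemma linearIndependent_of_apply_mul_apply_ne {ℓ₁ ℓ₂ : E →L[ℝ] ℝ} {u w : E}
    (hminor : ℓ₁ u * ℓ₂ w ≠ ℓ₂ u * ℓ₁ w) : LinearIndependent ℝ ![ℓ₁, ℓ₂] := by
  rw [LinearIndependent.pair_iff]
  intro s t hst
  have hu : s * ℓ₁ u + t * ℓ₂ u = 0 := by simpa using DFunLike.congr_fun hst u
  have hw : s * ℓ₁ w + t * ℓ₂ w = 0 := by simpa using DFunLike.congr_fun hst w
  have hs : s * (ℓ₁ u * ℓ₂ w - ℓ₂ u * ℓ₁ w) = 0 := by linear_combination ℓ₂ w * hu - ℓ₂ u * hw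
  have ht : t * (ℓ₁ u * ℓ₂ w - ℓ₂ u * ℓ₁ w) = 0 := by linear_combination ℓ₁ u * hw - ℓ₁ w * hu
  exact ⟨(mul_eq_zero.1 hs).resolve_right (sub_ne_zero.2 hminor),
    (mul_eq_zero.1 ht).resolve_right (sub_ne_zero.2 hminor)⟩

lemma mul_eq_mul_of_rotatedForm_eq_zero {ℓ₁ ℓ₂ : E →L[ℝ] ℝ} {θ : ℝ} {u w : E}
    (hu : rotatedForm ℓ₁ ℓ₂ θ u = 0) (hw : rotatedForm ℓ₁ ℓ₂ θ w = 0) :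
    ℓ₁ u * ℓ₂ w = ℓ₂ u * ℓ₁ w := by
  rw [rotatedForm_apply] at hu hw
  linear_combination Real.cos θ * (ℓ₂ w * hu - ℓ₂ u * hw) +
    Real.sin θ * (ℓ₁ u * hw - ℓ₁ w * hu) -
    (ℓ₁ u * ℓ₂ w - ℓ₂ u * ℓ₁ w) * Real.cos_sq_add_sin_sq θ

lemma exists_mem_open_triangle {S : Set E} (hS : Dense S) {ℓ₁ ℓ₂ : E →L[ℝ] ℝ} (x : E) {u w : E}
    (hminor : ℓ₁ u * ℓ₂ w ≠ ℓ₂ u * ℓ₁ w) :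
    ∃ q ∈ S, ∃ s t : ℝ, 0 < s ∧ 0 < t ∧ s + t < 1 ∧
      ℓ₁ (q - x) = s * ℓ₁ u + t * ℓ₁ w ∧ ℓ₂ (q - x) = s * ℓ₂ u + t * ℓ₂ w := by
  have hD : ℓ₁ u * ℓ₂ w - ℓ₂ u * ℓ₁ w ≠ 0 := sub_ne_zero.2 hminor
  set D := ℓ₁ u * ℓ₂ w - ℓ₂ u * ℓ₁ w with hD_def
  -- Cramer's rule for the barycentric coordinates of `q` in the projected triangle
  let σ : E → ℝ := fun q ↦ (ℓ₁ (q - x) * ℓ₂ w - ℓ₂ (q - x) * ℓ₁ w) / D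
  let τ : E → ℝ := fun q ↦ (ℓ₁ u * ℓ₂ (q - x) - ℓ₂ u * ℓ₁ (q - x)) / D
  have hσ : Continuous σ := by fun_prop
  have hτ : Continuous τ := by fun_prop
  have hopen : IsOpen {q | 0 < σ q ∧ 0 < τ q ∧ σ q + τ q < 1} :=
    (isOpen_lt continuous_const hσ).inter
      ((isOpen_lt continuous_const hτ).inter (isOpen_lt (hσ.add hτ) continuous_const))
  have hbary : σ (x + (1 / 3 : ℝ) • (u + w)) = 1 / 3 ∧ τ (x + (1 / 3 : ℝ) • (u + w)) = 1 / 3 := by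
    simp only [σ, τ, add_sub_cancel_left, map_smul, map_add, smul_eq_mul]
    constructor <;> rw [div_eq_iff hD, hD_def] <;> ring
  obtain ⟨q, ⟨hs, ht, hst⟩, hq⟩ := hS.inter_open_nonempty _ hopen
    ⟨x + (1 / 3 : ℝ) • (u + w), by
      simp only [mem_ofPred_eq, hbary]
      norm_num⟩
  refine ⟨q, hq, σ q, τ q, hs, ht, hst, ?_, ?_⟩ <;> simp only [σ, τ] <;> field_simp <;>
    rw [hD_def] <;> ring

lemma eq_zero_of_triangle {L : E →L[ℝ] ℝ} {q x y z : E} {s t : ℝ} (hs : 0 < s) (ht : 0 < t)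
    (hst : s + t < 1) (hq : L (q - x) = s * L (y - x) + t * L (z - x))
    (hx : 0 ≤ L (x - q)) (hy : 0 ≤ L (y - q)) (hz : 0 ≤ L (z - q)) :
    L (y - x) = 0 ∧ L (z - x) = 0 := by
  simp only [map_sub] at *
  have hbary : (1 - s - t) * (L x - L q) + s * (L y - L q) + t * (L z - L q) = 0 := by
    linear_combination -hq
  have hx' := mul_nonneg (by linarith : 0 ≤ 1 - s - t) hx
  have hy' := mul_nonneg hs.le hy
  have hz' := mul_nonneg ht.le hz
  have hx0 : (1 - s - t) * (L x - L q) = 0 := by linarith only [hbary, hx', hy', hz']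
  have hy0 : s * (L y - L q) = 0 := by linarith only [hbary, hx', hy', hz']
  have hz0 : t * (L z - L q) = 0 := by linarith only [hbary, hx', hy', hz']
  replace hx0 := (mul_eq_zero.1 hx0).resolve_left (by linarith)
  replace hy0 := (mul_eq_zero.1 hy0).resolve_left hs.ne'
  replace hz0 := (mul_eq_zero.1 hz0).resolve_left ht.ne'
  constructor <;> linarith

lemma collinear_of_forall_coord {ι : Type*} (b : Module.Basis ι ℝ E) {C : Set E}
    (hC : ∀ x ∈ C, ∀ y ∈ C, ∀ z ∈ C, ∀ i j, b.coord i (y - x) * b.coord j (z - x) =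
      b.coord j (y - x) * b.coord i (z - x)) : Collinear ℝ C := by
  rcases C.subsingleton_or_nontrivial with hsub | ⟨x, hx, y, hy, hxy⟩
  · exact hsub.induction_on (collinear_empty ℝ E) (collinear_singleton ℝ)
  obtain ⟨i, hi⟩ : ∃ i, b.coord i (y - x) ≠ 0 := by
    by_contra! h
    exact hxy (sub_eq_zero.1 (b.forall_coord_eq_zero_iff.1 h)).symm
  refine (collinear_iff_of_mem hx).2 ⟨y - x, fun z hz ↦
    ⟨b.coord i (z - x) / b.coord i (y - x), ?_⟩⟩
  rw [vadd_eq_add, ← sub_eq_iff_eq_add]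
  refine b.ext_elem fun j ↦ ?_
  have hij := hC x hx y hy z hz i j
  simp only [Module.Basis.coord_apply] at hi hij ⊢
  rw [map_smul, Finsupp.smul_apply, smul_eq_mul, div_mul_eq_mul_div, eq_div_iff hi]
  linear_combination hij

lemma exists_unit_direction_of_collinear [Nontrivial E] {C : Set E} (hC : Collinear ℝ C) :
    ∃ p e : E, ‖e‖ = 1 ∧ C ⊆ range fun s : ℝ ↦ p + s • e := by
  obtain ⟨p, w, hw⟩ := (collinear_iff_exists_forall_eq_smul_vadd (k := ℝ) C).1 hC
  obtain ⟨e, he, r, rfl⟩ : ∃ e : E, ‖e‖ = 1 ∧ ∃ r : ℝ, w = r • e := by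
    rcases eq_or_ne w 0 with rfl | hw0
    · obtain ⟨e, he⟩ := exists_norm_eq E zero_le_one
      exact ⟨e, he, 0, (zero_smul ℝ e).symm⟩
    · exact ⟨‖w‖⁻¹ • w, norm_smul_inv_norm hw0, ‖w‖,
        (smul_inv_smul₀ (norm_ne_zero_iff.2 hw0) w).symm⟩
  refine ⟨p, e, he, fun x hx ↦ ?_⟩
  obtain ⟨s, rfl⟩ := hw x hx
  exact ⟨s * r, by simp [mul_smul, add_comm]⟩

lemma exists_antitone_seq_of_forall_exists {α ι : Type*} [Countable ι]
    {P : Set α → Prop} {R : ι → Set α → Prop} {A : Set α} (hA : P A)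
    (hR : ∀ i B, P B → ∃ B' ⊆ B, P B' ∧ R i B') :
    ∃ B : ℕ → Set α, Antitone B ∧ (∀ k, P (B k)) ∧ ∀ i, ∃ k, R i (B k) := by
  rcases isEmpty_or_nonempty ι with _ | _
  · exact ⟨fun _ ↦ A, antitone_const, fun _ ↦ hA, isEmptyElim⟩
  choose! cut hcut_sub hcut_P hcut_R using hR
  obtain ⟨enum, henum⟩ := exists_surjective_nat ι
  let B : ℕ → Set α := fun k ↦ Nat.rec A (fun k B ↦ cut (enum k) B) k
  have hB : ∀ k, P (B k) := fun k ↦ Nat.rec hA (fun k hk ↦ hcut_P _ _ hk) k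
  refine ⟨B, antitone_nat_of_succ_le fun k ↦ hcut_sub _ _ (hB k), hB, fun i ↦ ?_⟩
  obtain ⟨k, rfl⟩ := henum i
  exact ⟨k + 1, hcut_R _ _ (hB k)⟩

-- If `x, y, z ∈ C` project to a nondegenerate triangle in some coordinate plane, a line through an
-- interior point of that triangle cannot have all three vertices on the same side.
lemma collinear_of_forall_rotatedForm [FiniteDimensional ℝ E] {ι : Type*}
    (b : Module.Basis ι ℝ E) {S : Set E} (hS : Dense S) {C : Set E}
    (hC : ∀ i j, ∀ q ∈ S, LinearIndependent ℝ
        ![(b.coord i).toContinuousLinearMap, (b.coord j).toContinuousLinearMap] →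
      ∃ θ, ∀ x ∈ C, 0 ≤ rotatedForm (b.coord i).toContinuousLinearMap
        (b.coord j).toContinuousLinearMap θ (x - q)) : Collinear ℝ C := by
  refine collinear_of_forall_coord b fun x hx y hy z hz i j ↦ by_contra fun hminor ↦ ?_
  set ℓ₁ := (b.coord i).toContinuousLinearMap
  set ℓ₂ := (b.coord j).toContinuousLinearMap
  have hminor' : ℓ₁ (y - x) * ℓ₂ (z - x) ≠ ℓ₂ (y - x) * ℓ₁ (z - x) := hminor
  have hℓ := linearIndependent_of_apply_mul_apply_ne hminor'
  obtain ⟨q, hq, s, t, hs, ht, hst, hq₁, hq₂⟩ := exists_mem_open_triangle hS x hminor'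
  obtain ⟨θ, hθ⟩ := hC i j q hq hℓ
  have hθq : rotatedForm ℓ₁ ℓ₂ θ (q - x) =
      s * rotatedForm ℓ₁ ℓ₂ θ (y - x) + t * rotatedForm ℓ₁ ℓ₂ θ (z - x) := by
    simp only [rotatedForm_apply, hq₁, hq₂]
    ring
  obtain ⟨hu, hw⟩ := eq_zero_of_triangle hs ht hst hθq (hθ x hx) (hθ y hy) (hθ z hz)
  exact hminor (mul_eq_mul_of_rotatedForm_eq_zero hu hw)

variable [MeasurableSpace E]

/-- A convex open piece of `K` on which `f` has integral zero while `g` keeps a positive integral: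
the invariant preserved by the bisection of `K`. -/
structure IsBalancedPiece (μ : Measure E) (K : Set E) (f g : E → ℝ) (A : Set E) : Prop where
  subset : A ⊆ K
  convex : Convex ℝ A
  isOpen : IsOpen A
  integral_eq_zero : ∫ x in A, f x ∂μ = 0
  integral_pos : 0 < ∫ x in A, g x ∂μ

lemma IsBalancedPiece.nonempty {μ : Measure E} {K A : Set E} {f g : E → ℝ}
    (hA : IsBalancedPiece μ K f g A) : A.Nonempty :=
  nonempty_iff_ne_empty.2 fun h ↦ by simpa [h] using hA.integral_pos

variable [BorelSpace E] [FiniteDimensional ℝ E] {μ : Measure E} [μ.IsAddHaarMeasure]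

lemma ae_apply_sub_ne_zero {L : E →L[ℝ] ℝ} (hL : L ≠ 0) (q : E) : ∀ᵐ x ∂μ, L (x - q) ≠ 0 := by
  have hker : L.toLinearMap.ker ≠ ⊤ := fun h ↦
    hL (ContinuousLinearMap.coe_injective (LinearMap.ker_eq_top.1 h))
  have hne : AffineSubspace.mk' q L.toLinearMap.ker ≠ ⊤ := fun h ↦
    hker (by rw [← AffineSubspace.direction_mk' q L.toLinearMap.ker, h,
      AffineSubspace.direction_top])
  filter_upwards [measure_eq_zero_iff_ae_notMem.1 (Measure.addHaar_affineSubspace μ _ hne)]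
    with x hx hx0
  exact hx (by simpa [AffineSubspace.mem_mk'] using hx0)

lemma setIntegral_halfSpace_add_neg {A : Set E} {u : E → ℝ} (hu : IntegrableOn u A μ)
    {L : E →L[ℝ] ℝ} (hL : L ≠ 0) (q : E) :
    (∫ x in A ∩ halfSpace L q, u x ∂μ) + ∫ x in A ∩ halfSpace (-L) q, u x ∂μ =
      ∫ x in A, u x ∂μ := by
  have hcompl : (A ∩ halfSpace (-L) q : Set E) =ᵐ[μ] (A \ halfSpace L q : Set E) := by
    filter_upwards [ae_apply_sub_ne_zero hL q] with x hx
    refine propext (show x ∈ A ∧ 0 < -L (x - q) ↔ x ∈ A ∧ ¬0 < L (x - q) from ?_)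
    rw [neg_pos, not_lt, le_iff_lt_or_eq, or_iff_left hx]
  rw [setIntegral_congr_set hcompl]
  exact integral_inter_add_sdiff (isOpen_halfSpace L q).measurableSet hu

lemma continuous_setIntegral_halfSpace {A : Set E} {u : E → ℝ}
    (hu : IntegrableOn u A μ) {L : ℝ → E →L[ℝ] ℝ} (hL_cont : Continuous L) (hL : ∀ θ, L θ ≠ 0)
    (q : E) : Continuous fun θ ↦ ∫ x in A ∩ halfSpace (L θ) q, u x ∂μ := by
  simp only [← setIntegral_indicator (isOpen_halfSpace _ q).measurableSet]
  rw [continuous_iff_continuousAt]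
  intro θ
  refine continuousAt_of_dominated (bound := fun x ↦ ‖u x‖)
    (.of_forall fun t ↦ hu.aestronglyMeasurable.indicator (isOpen_halfSpace _ q).measurableSet)
    (.of_forall fun t ↦ .of_forall fun x ↦ norm_indicator_le_norm_self _ _) hu.norm ?_
  filter_upwards [ae_restrict_of_ae (ae_apply_sub_ne_zero (hL θ) q)] with x hx
  have happ : Continuous fun t ↦ L t (x - q) := by fun_prop
  rcases lt_or_gt_of_ne hx with hneg | hpos
  · refine continuousAt_const (y := (0 : ℝ)) |>.congr ?_
    filter_upwards [happ.continuousAt.eventually_lt continuousAt_const hneg] with t ht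
    exact (indicator_of_notMem (show x ∉ halfSpace (L t) q from ht.not_gt) u).symm
  · refine continuousAt_const (y := u x) |>.congr ?_
    filter_upwards [continuousAt_const.eventually_lt happ.continuousAt hpos] with t ht
    exact (indicator_of_mem (show x ∈ halfSpace (L t) q from ht) u).symm

lemma exists_setIntegral_halfSpace_eq_zero {A : Set E} {f : E → ℝ}
    (hf : IntegrableOn f A μ) (hf0 : ∫ x in A, f x ∂μ = 0) {ℓ₁ ℓ₂ : E →L[ℝ] ℝ}
    (hℓ : LinearIndependent ℝ ![ℓ₁, ℓ₂]) (q : E) :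
    ∃ θ, ∫ x in A ∩ halfSpace (rotatedForm ℓ₁ ℓ₂ θ) q, f x ∂μ = 0 := by
  set G : ℝ → ℝ := fun θ ↦ ∫ x in A ∩ halfSpace (rotatedForm ℓ₁ ℓ₂ θ) q, f x ∂μ
  have hG : Continuous G :=
    continuous_setIntegral_halfSpace hf (continuous_rotatedForm ℓ₁ ℓ₂) (rotatedForm_ne_zero hℓ) q
  have hsum : G 0 + G (0 + Real.pi) = 0 := by
    simp only [G, rotatedForm_add_pi]
    rw [setIntegral_halfSpace_add_neg hf (rotatedForm_ne_zero hℓ 0), hf0]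
  rcases le_total (G 0) 0 with h0 | h0
  · exact mem_range_of_exists_le_of_exists_ge hG ⟨0, h0⟩ ⟨0 + Real.pi, by linarith⟩
  · exact mem_range_of_exists_le_of_exists_ge hG ⟨0 + Real.pi, by linarith⟩ ⟨0, h0⟩

namespace IsBalancedPiece

variable {K A : Set E} {f g : E → ℝ}

lemma exists_subset_halfSpace (hA : IsBalancedPiece μ K f g A) (hf : IntegrableOn f K μ)
    (hg : IntegrableOn g K μ) {ℓ₁ ℓ₂ : E →L[ℝ] ℝ} (hℓ : LinearIndependent ℝ ![ℓ₁, ℓ₂]) (q : E) :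
    ∃ B ⊆ A, IsBalancedPiece μ K f g B ∧ ∃ θ, B ⊆ halfSpace (rotatedForm ℓ₁ ℓ₂ θ) q := by
  obtain ⟨θ, hθ⟩ := exists_setIntegral_halfSpace_eq_zero (hf.mono_set hA.subset)
    hA.integral_eq_zero hℓ q
  set L := rotatedForm ℓ₁ ℓ₂ θ
  have hL0 : L ≠ 0 := rotatedForm_ne_zero hℓ θ
  have hθ' : ∫ x in A ∩ halfSpace (-L) q, f x ∂μ = 0 := by
    have hsplit := setIntegral_halfSpace_add_neg (hf.mono_set hA.subset) hL0 q
    rwa [hθ, zero_add, hA.integral_eq_zero] at hsplit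
  have hpiece : ∀ M : E →L[ℝ] ℝ, ∫ x in A ∩ halfSpace M q, f x ∂μ = 0 →
      0 < ∫ x in A ∩ halfSpace M q, g x ∂μ → IsBalancedPiece μ K f g (A ∩ halfSpace M q) :=
    fun M hfM hgM ↦ ⟨inter_subset_left.trans hA.subset, hA.convex.inter (convex_halfSpace M q),
      hA.isOpen.inter (isOpen_halfSpace M q), hfM, hgM⟩
  have hg_split := setIntegral_halfSpace_add_neg (hg.mono_set hA.subset) hL0 q
  rcases lt_or_ge 0 (∫ x in A ∩ halfSpace L q, g x ∂μ) with hpos | hnonpos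
  · exact ⟨_, inter_subset_left, hpiece L hθ hpos, θ, inter_subset_right⟩
  · refine ⟨_, inter_subset_left, hpiece (-L) hθ' (by linarith [hA.integral_pos]), θ + Real.pi, ?_⟩
    rw [rotatedForm_add_pi]
    exact inter_subset_right

lemma exists_antitone_seq_collinear (hA : IsBalancedPiece μ K f g A) (hf : IntegrableOn f K μ)
    (hg : IntegrableOn g K μ) : ∃ B : ℕ → Set E, Antitone B ∧
      (∀ k, IsBalancedPiece μ K f g (B k)) ∧ Collinear ℝ (⋂ k, closure (B k)) := by
  let b := Module.finBasis ℝ E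
  let ℓ := fun i ↦ (b.coord i).toContinuousLinearMap
  let IsCut : Fin (Module.finrank ℝ E) × Fin (Module.finrank ℝ E) × ℕ → Set E → Prop :=
    fun c B ↦ LinearIndependent ℝ ![ℓ c.1, ℓ c.2.1] →
      ∃ θ, B ⊆ halfSpace (rotatedForm (ℓ c.1) (ℓ c.2.1) θ) (TopologicalSpace.denseSeq E c.2.2)
  have hcut : ∀ c B, IsBalancedPiece μ K f g B →
      ∃ B' ⊆ B, IsBalancedPiece μ K f g B' ∧ IsCut c B' := fun c B hB ↦ by
    by_cases hℓ : LinearIndependent ℝ ![ℓ c.1, ℓ c.2.1]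
    · obtain ⟨B', hsub, hB', hθ⟩ := hB.exists_subset_halfSpace hf hg hℓ
        (TopologicalSpace.denseSeq E c.2.2)
      exact ⟨B', hsub, hB', fun _ ↦ hθ⟩
    · exact ⟨B, subset_rfl, hB, fun h ↦ absurd h hℓ⟩
  obtain ⟨B, hB_anti, hB, hB_cut⟩ := exists_antitone_seq_of_forall_exists hA hcut
  refine ⟨B, hB_anti, hB, collinear_of_forall_rotatedForm b (TopologicalSpace.denseRange_denseSeq E)
    fun i j q hq hℓ ↦ ?_⟩
  obtain ⟨m, rfl⟩ := hq
  obtain ⟨k, hk⟩ := hB_cut (i, j, m)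
  obtain ⟨θ, hθ⟩ := hk hℓ
  exact ⟨θ, fun x hx ↦ nonneg_of_mem_closure_halfSpace (closure_mono hθ (mem_iInter.1 hx k))⟩

theorem exists_thin [Nontrivial E] (hA : IsBalancedPiece μ K f g A)
    (hK : Bornology.IsBounded K) (hf : IntegrableOn f K μ) (hg : IntegrableOn g K μ) {ε : ℝ}
    (hε : 0 < ε) : ∃ B, IsBalancedPiece μ K f g B ∧ ∃ p e : E, ‖e‖ = 1 ∧
      B ⊆ Metric.thickening ε (range fun s : ℝ ↦ p + s • e) := by
  obtain ⟨B, hB_anti, hB, hcol⟩ := hA.exists_antitone_seq_collinear hf hg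
  obtain ⟨p, e, he, hline⟩ := exists_unit_direction_of_collinear hcol
  have hclosure : Antitone fun k ↦ closure (B k) := fun _ _ hkl ↦ closure_mono (hB_anti hkl)
  obtain ⟨k, hk⟩ := exists_subset_nhds_of_isCompact hclosure.directed_ge
    (fun k ↦ (hK.subset (hB k).subset).isCompact_closure) fun x hx ↦
    Metric.isOpen_thickening.mem_nhds (Metric.self_subset_thickening hε _ (hline hx))
  exact ⟨B k, hB k, p, e, he, subset_closure.trans hk⟩

end IsBalancedPiece

end Bisection

section ContDiff

lemma abs_setIntegral_sub_setIntegral_le {X : Type*} [MeasurableSpace X] {μ : Measure X}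
    {A : Set X} (hA : μ A < ∞) {u w : X → ℝ} (hu : IntegrableOn u A μ) (hw : IntegrableOn w A μ)
    {η : ℝ} (huw : ∀ x ∈ A, |u x - w x| ≤ η) :
    |(∫ x in A, u x ∂μ) - ∫ x in A, w x ∂μ| ≤ η * μ.real A := by
  rw [← integral_sub hu hw]
  exact norm_setIntegral_le_of_norm_le_const (f := fun x ↦ u x - w x) hA huw

lemma exists_forall_dist_lt_of_isBounded {X Y : Type*} [PseudoMetricSpace X] [ProperSpace X]
    [PseudoMetricSpace Y] {K : Set X} (hK : Bornology.IsBounded K) {f : X → Y} (hf : Continuous f)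
    {η : ℝ} (hη : 0 < η) : ∃ δ > 0, ∀ x ∈ K, ∀ y, dist x y < δ → dist (f x) (f y) < η := by
  obtain ⟨δ, hδ, hunif⟩ := Metric.mem_uniformity_dist.1
    (hK.isCompact_closure.uniformContinuousAt_of_continuousAt f (fun x _ ↦ hf.continuousAt)
      (Metric.dist_mem_uniformity hη))
  exact ⟨δ, hδ, fun x hx y hxy ↦ hunif hxy (subset_closure hx)⟩

variable {E : Type*} [NormedAddCommGroup E] [InnerProductSpace ℝ E]

lemma norm_sub_inner_smul_le {e : E} (he : ‖e‖ = 1) (r : E) : ‖r - inner ℝ e r • e‖ ≤ ‖r‖ := by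
  have hpyth : ‖r - inner ℝ e r • e‖ ^ 2 = ‖r‖ ^ 2 - inner ℝ e r ^ 2 := by
    rw [norm_sub_sq_real, inner_smul_right, real_inner_comm, norm_smul, he, mul_one,
      Real.norm_eq_abs, sq_abs]
    ring
  exact le_of_sq_le_sq (by linarith [sq_nonneg (inner ℝ e r)]) (norm_nonneg r)

lemma dist_orthogonal_foot_lt {p e x : E} (he : ‖e‖ = 1) {δ : ℝ}
    (hx : x ∈ Metric.thickening δ (range fun s : ℝ ↦ p + s • e)) :
    dist x (p + (inner ℝ e x - inner ℝ e p) • e) < δ := by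
  obtain ⟨_, ⟨s, rfl⟩, hs⟩ := Metric.mem_thickening_iff.1 hx
  have hee : inner ℝ e e = (1 : ℝ) := by rw [real_inner_self_eq_norm_sq, he, one_pow]
  set r := x - (p + s • e) with hr
  have hfoot : x - (p + (inner ℝ e x - inner ℝ e p) • e) = r - inner ℝ e r • e := by
    rw [hr, inner_sub_right, inner_add_right, inner_smul_right, hee]
    module
  rw [dist_eq_norm, hfoot]
  rw [dist_eq_norm] at hs
  refine lt_of_le_of_lt ?_ hs
  exact norm_sub_inner_smul_le he r

variable [FiniteDimensional ℝ E] [MeasurableSpace E] [BorelSpace E]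

lemma setIntegral_sq_le_of_near_ridge {A : Set E} (hconv : Convex ℝ A) (hopen : IsOpen A)
    (hbdd : Bornology.IsBounded A) (hne : A.Nonempty) {e : E} (he : ‖e‖ = 1) {φ φ' : ℝ → ℝ}
    (hφ : ∀ x, HasDerivAt φ (φ' x) x) (hφ' : Continuous φ') {f g : E → ℝ} (hf : Continuous f)
    (hg : Continuous g) (hf0 : ∫ x in A, f x = 0) {c η : ℝ} (hc : (Metric.diam A / Real.pi) ^ 2 ≤ c)
    (hfφ : ∀ x ∈ A, |f x - φ (inner ℝ e x)| ≤ η)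
    (hfφ_sq : ∀ x ∈ A, |f x ^ 2 - φ (inner ℝ e x) ^ 2| ≤ η)
    (hgφ_sq : ∀ x ∈ A, |g x ^ 2 - φ' (inner ℝ e x) ^ 2| ≤ η) :
    ∫ x in A, f x ^ 2 ≤ c * (∫ x in A, g x ^ 2) + (η ^ 2 + (1 + c) * η) * volume.real A := by
  have hφ_cont := continuous_of_forall_hasDerivAt hφ
  have hclose : ∀ u w : E → ℝ, Continuous u → Continuous w → (∀ x ∈ A, |u x - w x| ≤ η) →
      |(∫ x in A, u x) - ∫ x in A, w x| ≤ η * volume.real A := fun u w hu hw huw ↦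
    abs_setIntegral_sub_setIntegral_le hbdd.measure_lt_top (integrableOn_of_isBounded hu hbdd)
      (integrableOn_of_isBounded hw hbdd) huw
  have hT := hclose _ _ hf (by fun_prop) hfφ
  have hS := (abs_le.1 (hclose _ _ (by fun_prop) (by fun_prop) hfφ_sq)).2
  have hR := (abs_le.1 (hclose _ _ (by fun_prop) (by fun_prop) hgφ_sq)).1
  have hridge := poincare_comp_inner hconv hopen hbdd hne he hφ hφ'
  have hvol : 0 < volume.real A :=
    ENNReal.toReal_pos (hopen.measure_pos volume hne).ne' hbdd.measure_lt_top.ne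
  set V := volume.real A
  set S := ∫ x in A, φ (inner ℝ e x) ^ 2
  set T := ∫ x in A, φ (inner ℝ e x)
  set R := ∫ x in A, φ' (inner ℝ e x) ^ 2
  have hR0 : 0 ≤ R := integral_nonneg fun x ↦ sq_nonneg _
  have hc0 : 0 ≤ c := (sq_nonneg _).trans hc
  have hT_sq : T ^ 2 ≤ (η * V) ^ 2 := by
    rw [hf0, zero_sub, abs_neg] at hT
    exact sq_le_sq' (abs_le.1 hT).1 (abs_le.1 hT).2
  have hSR : S ≤ c * R + η ^ 2 * V := by
    refine le_of_mul_le_mul_left ?_ hvol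
    calc V * S ≤ (Metric.diam A / Real.pi) ^ 2 * (V * R) + T ^ 2 := by linarith
      _ ≤ c * (V * R) + (η * V) ^ 2 := by gcongr
      _ = V * (c * R + η ^ 2 * V) := by ring
  calc ∫ x in A, f x ^ 2 ≤ c * R + η ^ 2 * V + η * V := by linarith
    _ ≤ c * ((∫ x in A, g x ^ 2) + η * V) + η ^ 2 * V + η * V := by gcongr; linarith
    _ = c * (∫ x in A, g x ^ 2) + (η ^ 2 + (1 + c) * η) * V := by ring

lemma exists_pos_sq_add_mul_lt (a : ℝ) {ε : ℝ} (hε : 0 < ε) : ∃ η > 0, η ^ 2 + a * η < ε := by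
  have hcont : Continuous fun η : ℝ ↦ η ^ 2 + a * η := by fun_prop
  have hlim : Tendsto (fun η : ℝ ↦ η ^ 2 + a * η) (𝓝[>] 0) (𝓝 0) :=
    (hcont.tendsto' 0 0 (by simp)).mono_left nhdsWithin_le_nhds
  exact (eventually_mem_nhdsWithin.and (hlim.eventually_lt_const hε)).exists

lemma abs_apply_sq_sub_le_dist_smulRight {V : Type*} [NormedAddCommGroup V] [NormedSpace ℝ V]
    {e : V} (he : ‖e‖ = 1) (L M : V →L[ℝ] ℝ) :
    |L e ^ 2 - M e ^ 2| ≤ dist (L.smulRight L) (M.smulRight M) := by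
  calc |L e ^ 2 - M e ^ 2| ≤ ‖L.smulRight L - M.smulRight M‖ := by
        simpa [he, sq] using (L.smulRight L - M.smulRight M).le_opNorm₂ e e
    _ = dist (L.smulRight L) (M.smulRight M) := (dist_eq_norm (E := V →L[ℝ] V →L[ℝ] ℝ) _ _).symm

lemma exists_thickness_setIntegral_sq_le {K : Set E} (hK : Bornology.IsBounded K) {f : E → ℝ}
    (hf : ContDiff ℝ 1 f) {ε : ℝ} (hε : 0 < ε) : ∃ δ > 0, ∀ A ⊆ K, Convex ℝ A → IsOpen A →
      A.Nonempty → ∫ x in A, f x = 0 → ∀ p e : E, ‖e‖ = 1 →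
      A ⊆ Metric.thickening δ (range fun s : ℝ ↦ p + s • e) →
      ∫ x in A, f x ^ 2 ≤ (Metric.diam K / Real.pi) ^ 2 * (∫ x in A, ‖fderiv ℝ f x‖ ^ 2) +
        ε * volume.real A := by
  set c := (Metric.diam K / Real.pi) ^ 2
  have hf_cont := hf.continuous
  have hf'_cont := hf.continuous_fderiv one_ne_zero
  obtain ⟨η, hη, hηε⟩ := exists_pos_sq_add_mul_lt (1 + c) hε
  let Q : E → E →L[ℝ] E →L[ℝ] ℝ := fun x ↦ (fderiv ℝ f x).smulRight (fderiv ℝ f x)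
  have hQ : Continuous Q :=
    ((ContinuousLinearMap.smulRightL ℝ E (E →L[ℝ] ℝ)).continuous.comp hf'_cont).clm_apply hf'_cont
  obtain ⟨δ, hδ, hclose⟩ := exists_forall_dist_lt_of_isBounded hK
    (f := fun x ↦ (f x, f x ^ 2, Q x))
    (hf_cont.prodMk ((hf_cont.pow 2).prodMk hQ)) hη
  refine ⟨δ, hδ, fun A hAK hconv hopen hne hf0 p e he hthin ↦ ?_⟩
  let P : ℝ → E := fun s ↦ p + (s - inner ℝ e p) • e
  have hP : ∀ s, HasDerivAt P e s := fun s ↦ by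
    simpa [P] using (((hasDerivAt_id s).sub_const (inner ℝ e p)).smul_const e).const_add p
  have hφ : ∀ s, HasDerivAt (f ∘ P) (fderiv ℝ f (P s) e) s := fun s ↦
    (hf.differentiable one_ne_zero (P s)).hasFDerivAt.comp_hasDerivAt s (hP s)
  have hφ' : Continuous fun s ↦ fderiv ℝ f (P s) e := by fun_prop
  have hdiam : (Metric.diam A / Real.pi) ^ 2 ≤ c := by
    have := Metric.diam_mono hAK hK
    change _ ≤ (Metric.diam K / Real.pi) ^ 2
    gcongr
  have hnear : ∀ x ∈ A, dist (f x, f x ^ 2, Q x) (f (P (inner ℝ e x)), f (P (inner ℝ e x)) ^ 2,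
      Q (P (inner ℝ e x))) ≤ η := fun x hx ↦
    (hclose x (hAK hx) _ (dist_orthogonal_foot_lt he (hthin hx))).le
  simp only [Prod.dist_eq, max_le_iff] at hnear
  have hridge := setIntegral_sq_le_of_near_ridge hconv hopen (hK.subset hAK) hne he hφ hφ' hf_cont
    (g := fun x ↦ fderiv ℝ f x e) (by fun_prop) hf0 hdiam (fun x hx ↦ (hnear x hx).1)
    (fun x hx ↦ (hnear x hx).2.1)
    fun x hx ↦ (abs_apply_sq_sub_le_dist_smulRight he _ _).trans (hnear x hx).2.2
  have hderiv : ∫ x in A, fderiv ℝ f x e ^ 2 ≤ ∫ x in A, ‖fderiv ℝ f x‖ ^ 2 :=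
    setIntegral_mono (integrableOn_of_isBounded (by fun_prop) (hK.subset hAK))
      (integrableOn_of_isBounded (by fun_prop) (hK.subset hAK)) fun x ↦
      sq_le_sq.2 (by simpa [he] using (fderiv ℝ f x).le_opNorm e)
  have : 0 ≤ c := sq_nonneg _
  exact hridge.trans (by gcongr)

lemma poincare_of_contDiff_add [Nontrivial E] {K : Set E} (hconv : Convex ℝ K) (hopen : IsOpen K)
    (hbdd : Bornology.IsBounded K) {f : E → ℝ} (hf : ContDiff ℝ 1 f) (hf0 : ∫ x in K, f x = 0)
    {ε : ℝ} (hε : 0 < ε) :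
    ∫ x in K, f x ^ 2 ≤ (Metric.diam K / Real.pi) ^ 2 * (∫ x in K, ‖fderiv ℝ f x‖ ^ 2) +
      ε * volume.real K := by
  set c := (Metric.diam K / Real.pi) ^ 2
  have hf_cont := hf.continuous
  have := hf.continuous_fderiv one_ne_zero
  have hdefect : ∀ A ⊆ K, ∫ x in A, (f x ^ 2 - c * ‖fderiv ℝ f x‖ ^ 2 - ε) =
      (∫ x in A, f x ^ 2) - (c * (∫ x in A, ‖fderiv ℝ f x‖ ^ 2) + ε * volume.real A) :=
    fun A hA ↦ by
    have hint : ∀ u : E → ℝ, Continuous u → IntegrableOn u A := fun u hu ↦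
      integrableOn_of_isBounded hu (hbdd.subset hA)
    rw [integral_sub (hint _ (by fun_prop)) (hint _ (by fun_prop)),
      integral_sub (hint _ (by fun_prop)) (hint _ (by fun_prop)), integral_const_mul,
      setIntegral_const, smul_eq_mul, mul_comm ε, sub_sub]
  by_contra! hlt
  have hK : IsBalancedPiece volume K f (fun x ↦ f x ^ 2 - c * ‖fderiv ℝ f x‖ ^ 2 - ε) K :=
    ⟨subset_rfl, hconv, hopen, hf0, by rw [hdefect K subset_rfl]; linarith⟩
  obtain ⟨δ, hδ, hthin⟩ := exists_thickness_setIntegral_sq_le hbdd hf hε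
  obtain ⟨B, hB, p, e, he, hBδ⟩ := hK.exists_thin hbdd (integrableOn_of_isBounded hf_cont hbdd)
    (integrableOn_of_isBounded (by fun_prop) hbdd) hδ
  have hpos := hB.integral_pos
  rw [hdefect B hB.subset] at hpos
  linarith [hthin B hB.subset hB.convex hB.isOpen hB.nonempty hB.integral_eq_zero p e he hBδ]

theorem poincare_of_contDiff {K : Set E} (hconv : Convex ℝ K) (hopen : IsOpen K)
    (hbdd : Bornology.IsBounded K) {f : E → ℝ} (hf : ContDiff ℝ 1 f) (hf0 : ∫ x in K, f x = 0) :
    ∫ x in K, f x ^ 2 ≤ (Metric.diam K / Real.pi) ^ 2 * ∫ x in K, ‖fderiv ℝ f x‖ ^ 2 := by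
  rcases subsingleton_or_nontrivial E with hE | hE
  · have hf_sq : ∀ x, f x ^ 2 = f 0 * f x := fun x ↦ by rw [Subsingleton.elim x 0, sq]
    simp_rw [hf_sq, integral_const_mul, hf0, mul_zero]
    positivity
  have hV : 0 < volume.real K + 1 := by positivity
  refine le_of_forall_pos_le_add fun ε hε ↦
    (poincare_of_contDiff_add hconv hopen hbdd hf hf0 (div_pos hε hV)).trans ?_
  gcongr
  rw [div_mul_eq_mul_div, div_le_iff₀ hV]
  linarith

end ContDiff

section Mollification

open scoped Convolution

lemma sq_integral_mul_le {X : Type*} [MeasurableSpace X] {μ : Measure X} {ρ h : X → ℝ}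
    (hρ_nonneg : ∀ t, 0 ≤ ρ t) (hρ_one : ∫ t, ρ t ∂μ = 1) (hh : Integrable (fun t ↦ ρ t * h t) μ)
    (hh_sq : Integrable (fun t ↦ ρ t * h t ^ 2) μ) :
    (∫ t, ρ t * h t ∂μ) ^ 2 ≤ ∫ t, ρ t * h t ^ 2 ∂μ := by
  set a := ∫ t, ρ t * h t ∂μ with ha
  have hρ : Integrable ρ μ := integrable_of_integral_eq_one hρ_one
  have hdiff : Integrable (fun t ↦ ρ t * h t ^ 2 - 2 * a * (ρ t * h t)) μ :=
    hh_sq.sub (hh.const_mul _)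
  have hvar : ∫ t, ρ t * (h t - a) ^ 2 ∂μ = (∫ t, ρ t * h t ^ 2 ∂μ) - a ^ 2 := by
    calc ∫ t, ρ t * (h t - a) ^ 2 ∂μ
        = ∫ t, (ρ t * h t ^ 2 - 2 * a * (ρ t * h t) + a ^ 2 * ρ t) ∂μ := by
          congr with t; ring
      _ = (∫ t, ρ t * h t ^ 2 ∂μ) - a ^ 2 := by
          rw [integral_add hdiff (hρ.const_mul _),
            integral_sub hh_sq (hh.const_mul _), integral_const_mul, integral_const_mul, hρ_one,
            ← ha]
          ring
  have hnonneg : 0 ≤ ∫ t, ρ t * (h t - a) ^ 2 ∂μ :=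
    integral_nonneg fun t ↦ mul_nonneg (hρ_nonneg t) (sq_nonneg _)
  linarith

variable {E F : Type*} [NormedAddCommGroup E] [NormedSpace ℝ E] [FiniteDimensional ℝ E]
  [MeasurableSpace E] [BorelSpace E] {μ : Measure E}

lemma memLp_two_indicator_of_hasFDerivAt {K : Set E} (hK : MeasurableSet K) {v : E → ℝ}
    {v' : E → E →L[ℝ] ℝ} (hv : ∀ x ∈ K, HasFDerivAt v (v' x) x)
    (hv' : IntegrableOn (fun x ↦ ‖v' x‖ ^ 2) K μ) : MemLp (K.indicator v') 2 μ := by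
  have hmeas : AEStronglyMeasurable v' (μ.restrict K) :=
    (measurable_fderiv ℝ v).aestronglyMeasurable.congr
      ((ae_restrict_mem hK).mono fun x hx ↦ (hv x hx).fderiv)
  exact (memLp_indicator_iff_restrict hK).2 ((memLp_two_iff_integrable_sq_norm hmeas).2 hv')

variable [μ.IsAddHaarMeasure] [NormedAddCommGroup F] [NormedSpace ℝ F] {ρ : E → ℝ} {u : E → F}
  {u' : E → E →L[ℝ] F} {x : E}

lemma integrable_smul_comp_sub {G : Type*} [NormedAddCommGroup G] [NormedSpace ℝ G] {g : E → G}
    (hρ : Continuous ρ) (hρ_supp : HasCompactSupport ρ) (hg : LocallyIntegrable g μ) (x : E) :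
    Integrable (fun t ↦ ρ t • g (x - t)) μ :=
  hρ_supp.convolutionExists_left (ContinuousLinearMap.lsmul ℝ ℝ) hρ hg x

lemma fderiv_convolution_apply [CompleteSpace F] (hρ : ContDiff ℝ 1 ρ)
    (hρ_supp : HasCompactSupport ρ) (hu : LocallyIntegrable u μ) (hu' : LocallyIntegrable u' μ)
    (hderiv : ∀ t ∈ tsupport ρ, HasFDerivAt u (u' (x - t)) (x - t)) (e : E) :
    fderiv ℝ (ρ ⋆[ContinuousLinearMap.lsmul ℝ ℝ, μ] u) x e = ∫ t, ρ t • u' (x - t) e ∂μ := by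
  have hρ' : Continuous (fderiv ℝ ρ) := hρ.continuous_fderiv one_ne_zero
  have hρ'_supp : HasCompactSupport (fderiv ℝ ρ) := hρ_supp.fderiv (𝕜 := ℝ)
  have hint : Integrable (fun t ↦ (ContinuousLinearMap.lsmul ℝ ℝ).precompL E (fderiv ℝ ρ t)
      (u (x - t))) μ :=
    hρ'_supp.convolutionExists_left _ hρ' hu x
  have hparts := integral_bilinear_hasFDerivAt_right_eq_neg_left_of_integrable (μ := μ)
    (B := ContinuousLinearMap.lsmul ℝ ℝ) (f := ρ) (g := fun t ↦ u (x - t)) (v := e)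
    (g' := fun t ↦ -u' (x - t)) (hint.apply_continuousLinearMap e)
    (by simpa using
      (integrable_smul_comp_sub hρ.continuous hρ_supp hu' x).neg.apply_continuousLinearMap e)
    (integrable_smul_comp_sub hρ.continuous hρ_supp hu x)
    (fun t _ ↦ (hρ.differentiable one_ne_zero t).hasFDerivAt)
    fun t ht ↦ by
      simpa [Function.comp_def] using (hderiv t ht).comp t ((hasFDerivAt_id t).const_sub x)
  rw [(hρ_supp.hasFDerivAt_convolution_left _ hρ hu x).fderiv, convolution_def,
    ContinuousLinearMap.integral_apply hint]
  simpa [integral_neg] using hparts.symm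

lemma norm_fderiv_convolution_sq_le [CompleteSpace F] (hρ : ContDiff ℝ 1 ρ)
    (hρ_supp : HasCompactSupport ρ) (hρ_nonneg : ∀ t, 0 ≤ ρ t) (hρ_one : ∫ t, ρ t ∂μ = 1)
    (hu : LocallyIntegrable u μ) (hu' : MemLp u' 2 μ)
    (hderiv : ∀ t ∈ tsupport ρ, HasFDerivAt u (u' (x - t)) (x - t)) :
    ‖fderiv ℝ (ρ ⋆[ContinuousLinearMap.lsmul ℝ ℝ, μ] u) x‖ ^ 2 ≤
      (ρ ⋆[ContinuousLinearMap.lsmul ℝ ℝ, μ] fun t ↦ ‖u' t‖ ^ 2) x := by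
  have hu'_loc : LocallyIntegrable u' μ := hu'.locallyIntegrable one_le_two
  have hnorm := integrable_smul_comp_sub hρ.continuous hρ_supp
    (hu'.norm.locallyIntegrable one_le_two) x
  have hnorm_sq := integrable_smul_comp_sub hρ.continuous hρ_supp
    ((memLp_two_iff_integrable_sq_norm hu'.1).1 hu').locallyIntegrable x
  have hbound : ‖fderiv ℝ (ρ ⋆[ContinuousLinearMap.lsmul ℝ ℝ, μ] u) x‖ ≤
      ∫ t, ρ t * ‖u' (x - t)‖ ∂μ := by
    refine ContinuousLinearMap.opNorm_le_bound _
      (integral_nonneg fun t ↦ mul_nonneg (hρ_nonneg t) (norm_nonneg _)) fun e ↦ ?_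
    rw [fderiv_convolution_apply hρ hρ_supp hu hu'_loc hderiv, ← integral_mul_const]
    refine norm_integral_le_of_norm_le (hnorm.mul_const _) (.of_forall fun t ↦ ?_)
    rw [norm_smul, Real.norm_of_nonneg (hρ_nonneg t), mul_assoc]
    exact mul_le_mul_of_nonneg_left ((u' (x - t)).le_opNorm e) (hρ_nonneg t)
  calc ‖fderiv ℝ (ρ ⋆[ContinuousLinearMap.lsmul ℝ ℝ, μ] u) x‖ ^ 2
      ≤ (∫ t, ρ t * ‖u' (x - t)‖ ∂μ) ^ 2 := by gcongr
    _ ≤ ∫ t, ρ t * ‖u' (x - t)‖ ^ 2 ∂μ := sq_integral_mul_le hρ_nonneg hρ_one hnorm hnorm_sq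

lemma setIntegral_norm_fderiv_convolution_sq_le [CompleteSpace F] {A : Set E}
    (hA : MeasurableSet A) (hρ : ContDiff ℝ 1 ρ)
    (hρ_supp : HasCompactSupport ρ) (hρ_nonneg : ∀ t, 0 ≤ ρ t) (hρ_one : ∫ t, ρ t ∂μ = 1)
    (hu : LocallyIntegrable u μ) (hu' : MemLp u' 2 μ)
    (hderiv : ∀ x ∈ A, ∀ t ∈ tsupport ρ, HasFDerivAt u (u' (x - t)) (x - t)) :
    ∫ x in A, ‖fderiv ℝ (ρ ⋆[ContinuousLinearMap.lsmul ℝ ℝ, μ] u) x‖ ^ 2 ∂μ ≤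
      ∫ x, ‖u' x‖ ^ 2 ∂μ := by
  have hu'_sq := (memLp_two_iff_integrable_sq_norm hu'.1).1 hu'
  have hρ_int : Integrable ρ μ := integrable_of_integral_eq_one hρ_one
  have hconv := hρ_int.integrable_convolution (ContinuousLinearMap.lsmul ℝ ℝ) hu'_sq
  calc ∫ x in A, ‖fderiv ℝ (ρ ⋆[ContinuousLinearMap.lsmul ℝ ℝ, μ] u) x‖ ^ 2 ∂μ
      ≤ ∫ x in A, (ρ ⋆[ContinuousLinearMap.lsmul ℝ ℝ, μ] fun t ↦ ‖u' t‖ ^ 2) x ∂μ :=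
        integral_mono_of_nonneg (.of_forall fun x ↦ sq_nonneg _) hconv.integrableOn
          ((ae_restrict_mem hA).mono fun x hx ↦ norm_fderiv_convolution_sq_le hρ hρ_supp
            hρ_nonneg hρ_one hu hu' (hderiv x hx))
    _ ≤ ∫ x, (ρ ⋆[ContinuousLinearMap.lsmul ℝ ℝ, μ] fun t ↦ ‖u' t‖ ^ 2) x ∂μ :=
        setIntegral_le_integral hconv (.of_forall fun x ↦
          integral_nonneg fun t ↦ mul_nonneg (hρ_nonneg t) (sq_nonneg _))
    _ = ∫ x, ‖u' x‖ ^ 2 ∂μ := by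
        rw [integral_convolution _ hρ_int hu'_sq, hρ_one]
        simp

theorem exists_contDiff_near_setIntegral_norm_fderiv_sq_le {K A : Set E} (hK : IsOpen K)
    (hA : IsCompact A) (hAK : A ⊆ K) {v : E → ℝ} {v' : E → E →L[ℝ] ℝ}
    (hv : ∀ x ∈ K, HasFDerivAt v (v' x) x) (hv' : IntegrableOn (fun x ↦ ‖v' x‖ ^ 2) K μ)
    {δ : ℝ} (hδ : 0 < δ) :
    ∃ w : E → ℝ, ContDiff ℝ 1 w ∧ (∀ x ∈ A, |w x - v x| ≤ δ) ∧
      ∫ x in A, ‖fderiv ℝ w x‖ ^ 2 ∂μ ≤ ∫ x in K, ‖v' x‖ ^ 2 ∂μ := by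
  obtain ⟨R, hR, hRK⟩ := hA.exists_cthickening_subset_open hK hAK
  set B := Metric.cthickening R A
  have hB : IsCompact B := hA.cthickening
  have hvB : ContinuousOn v B := fun x hx ↦ (hv x (hRK hx)).continuousAt.continuousWithinAt
  obtain ⟨η, hη, hunif⟩ :=
    Metric.uniformContinuousOn_iff.1 (hB.uniformContinuousOn_of_continuous hvB) δ hδ
  obtain ⟨r, hr, hr_lt⟩ := exists_between (lt_min hR hη)
  obtain ⟨hrR, hrη⟩ := lt_min_iff.1 hr_lt
  have hball : ∀ x ∈ A, ∀ y, dist y x ≤ r → B ∈ 𝓝 y := fun x hx y hy ↦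
    mem_of_superset (Metric.isOpen_thickening.mem_nhds
      (Metric.mem_thickening_iff.2 ⟨x, hx, hy.trans_lt hrR⟩))
      (Metric.thickening_subset_cthickening R A)
  let φ : ContDiffBump (0 : E) := ⟨r / 2, r, half_pos hr, half_lt_self hr⟩
  have hu : LocallyIntegrable (B.indicator v) μ :=
    ((hvB.integrableOn_compact hB).integrable_indicator hB.measurableSet).locallyIntegrable
  have hφ_C1 : ContDiff ℝ 1 (φ.normed μ) := φ.contDiff_normed
  refine ⟨φ.normed μ ⋆[ContinuousLinearMap.lsmul ℝ ℝ, μ] B.indicator v,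
    φ.hasCompactSupport_normed.contDiff_convolution_left (n := 1) _ hφ_C1 hu,
    fun x hx ↦ ?_, ?_⟩
  · have hxB : x ∈ B := mem_of_mem_nhds (hball x hx x (by simpa using hr.le))
    rw [← indicator_of_mem hxB v]
    refine φ.dist_normed_convolution_le hu.aestronglyMeasurable fun y hy ↦ ?_
    have hyx : dist y x < r := hy
    have hyB : y ∈ B := mem_of_mem_nhds (hball x hx y hyx.le)
    rw [indicator_of_mem hyB, indicator_of_mem hxB]
    exact (hunif y hyB x hxB (hyx.trans hrη)).le
  · have hKm := hK.measurableSet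
    refine (setIntegral_norm_fderiv_convolution_sq_le hA.measurableSet hφ_C1
      φ.hasCompactSupport_normed φ.nonneg_normed φ.integral_normed hu
      (memLp_two_indicator_of_hasFDerivAt hKm hv hv') fun x hx t ht ↦ ?_).trans_eq ?_
    · rw [φ.tsupport_normed_eq, mem_closedBall_zero_iff] at ht
      have hB_nhds : B ∈ 𝓝 (x - t) := hball x hx _ (by simpa using ht)
      have hxt : x - t ∈ K := hRK (mem_of_mem_nhds hB_nhds)
      rw [indicator_of_mem hxt]
      exact (hv _ hxt).congr_of_eventuallyEq (mem_of_superset hB_nhds fun y hy ↦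
        indicator_of_mem hy v)
    · rw [← integral_indicator hKm]
      congr with x
      by_cases hx : x ∈ K <;> simp [hx]

end Mollification

section Average

variable {X : Type*} [MeasurableSpace X] {μ : Measure X} [IsFiniteMeasure μ] {v : X → ℝ}

lemma integral_sub_const_sq (hv : MemLp v 2 μ) (c : ℝ) :
    ∫ x, (v x - c) ^ 2 ∂μ =
      (∫ x, (v x - ⨍ y, v y ∂μ) ^ 2 ∂μ) + μ.real univ * ((⨍ y, v y ∂μ) - c) ^ 2 := by
  set m := ⨍ y, v y ∂μ
  have hvm : MemLp (fun x ↦ v x - m) 2 μ := hv.sub (memLp_const m)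
  have hvm_int : Integrable (fun x ↦ v x - m) μ := hvm.integrable one_le_two
  have hlin : Integrable (fun x ↦ 2 * (m - c) * (v x - m) + (m - c) ^ 2) μ :=
    (hvm_int.const_mul _).add (integrable_const _)
  calc ∫ x, (v x - c) ^ 2 ∂μ
      = ∫ x, ((v x - m) ^ 2 + (2 * (m - c) * (v x - m) + (m - c) ^ 2)) ∂μ := by
        congr with x; ring
    _ = _ := by
        rw [integral_add hvm.integrable_sq hlin,
          integral_add (hvm_int.const_mul _) (integrable_const _), integral_const_mul,
          integral_sub_average, integral_const, mul_zero, zero_add, smul_eq_mul]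

lemma integral_sub_average_sq_le (hv : MemLp v 2 μ) (c : ℝ) :
    ∫ x, (v x - ⨍ y, v y ∂μ) ^ 2 ∂μ ≤ ∫ x, (v x - c) ^ 2 ∂μ := by
  rw [integral_sub_const_sq hv c]
  exact le_add_of_nonneg_right (by positivity)

end Average

lemma add_sq_le_of_abs_sub_le {a b δ : ℝ} (hδ : 0 < δ) (hab : |a - b| ≤ δ) :
    a ^ 2 ≤ (1 + δ) * b ^ 2 + (δ + δ ^ 2) := by
  have hyoung : δ * (2 * b * (a - b)) ≤ δ * (δ * b ^ 2 + δ) := by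
    have := sq_abs (a - b)
    nlinarith [sq_nonneg (δ * b - (a - b)), pow_le_pow_left₀ (abs_nonneg _) hab 2]
  have hsq : (a - b) ^ 2 ≤ δ ^ 2 := sq_le_sq' (abs_le.1 hab).1 (abs_le.1 hab).2
  linarith [le_of_mul_le_mul_left hyoung hδ]

section Exhaustion

variable {E : Type*} [NormedAddCommGroup E] [NormedSpace ℝ E]

lemma closure_preimage_homothety_subset {K : Set E} (hconv : Convex ℝ K) (hopen : IsOpen K)
    {x₀ : E} (hx₀ : x₀ ∈ K) {s : ℝ} (hs : 1 < s) :
    closure (AffineMap.homothety x₀ s ⁻¹' K) ⊆ K := fun x hx ↦ by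
  have hs0 : s ≠ 0 := (one_pos.trans hs).ne'
  have hmem : AffineMap.homothety x₀ s x ∈ closure K :=
    (AffineMap.homothety_continuous x₀ s).closure_preimage_subset K hx
  obtain ⟨y, hy, hyx⟩ := hconv.closure_subset_image_homothety_interior_of_one_lt
    (hopen.interior_eq.symm ▸ hx₀) s hs hmem
  have hyx' : y = x := by simpa [AffineMap.homothety_apply, hs0] using hyx
  exact hyx' ▸ interior_subset hy

lemma aecover_preimage_homothety [MeasurableSpace E] [BorelSpace E] {μ : Measure E} {K : Set E}
    (hopen : IsOpen K) (x₀ : E) :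
    AECover (μ.restrict K) (𝓝[>] (1 : ℝ)) fun s ↦ AffineMap.homothety x₀ s ⁻¹' K where
  ae_eventually_mem := (ae_restrict_mem hopen.measurableSet).mono fun x hx ↦ by
    have hcont : Continuous fun s : ℝ ↦ AffineMap.homothety x₀ s x := by
      simp only [AffineMap.homothety_apply]
      fun_prop
    exact (hcont.tendsto' 1 x (by simp)).mono_left nhdsWithin_le_nhds (hopen.mem_nhds hx)
  measurableSet s := (hopen.preimage (AffineMap.homothety_continuous x₀ s)).measurableSet

lemma tendsto_setIntegral_preimage_homothety [MeasurableSpace E] [BorelSpace E] {μ : Measure E}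
    {K : Set E} (hconv : Convex ℝ K) (hopen : IsOpen K) {x₀ : E} (hx₀ : x₀ ∈ K) {g : E → ℝ}
    (hg : IntegrableOn g K μ) :
    Tendsto (fun s : ℝ ↦ ∫ x in AffineMap.homothety x₀ s ⁻¹' K, g x ∂μ) (𝓝[>] 1)
      (𝓝 (∫ x in K, g x ∂μ)) := by
  have hcover := aecover_preimage_homothety (μ := μ) hopen x₀
  refine (hcover.integral_tendsto_of_countably_generated hg).congr' ?_
  filter_upwards [self_mem_nhdsWithin] with s hs
  rw [Measure.restrict_restrict (hcover.measurableSet s),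
    inter_eq_left.2 (subset_closure.trans (closure_preimage_homothety_subset hconv hopen hx₀ hs))]

end Exhaustion

section Main

variable {E : Type*} [NormedAddCommGroup E] [InnerProductSpace ℝ E] [FiniteDimensional ℝ E]
  [MeasurableSpace E] [BorelSpace E]

lemma poincare_sub_average_of_contDiff {A : Set E} (hconv : Convex ℝ A) (hopen : IsOpen A)
    (hbdd : Bornology.IsBounded A) {w : E → ℝ} (hw : ContDiff ℝ 1 w) :
    ∫ x in A, (w x - ⨍ y in A, w y) ^ 2 ≤
      (Metric.diam A / Real.pi) ^ 2 * ∫ x in A, ‖fderiv ℝ w x‖ ^ 2 := by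
  have : IsFiniteMeasure (volume.restrict A) :=
    isFiniteMeasure_restrict.2 hbdd.measure_lt_top.ne
  simpa only [fderiv_sub_const] using poincare_of_contDiff hconv hopen hbdd
    (hw.sub contDiff_const) (integral_sub_average (volume.restrict A) w)

variable {K : Set E} {v : E → ℝ} {v' : E → E →L[ℝ] ℝ}

lemma poincare_of_closure_subset_add {A : Set E} (hconv : Convex ℝ A) (hA : IsOpen A)
    (hK : IsOpen K) (hbdd : Bornology.IsBounded K) (hAK : closure A ⊆ K)
    (hv : ∀ x ∈ K, HasFDerivAt v (v' x) x) (hv_L2 : MemLp v 2 (volume.restrict A))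
    (hv' : IntegrableOn (fun x ↦ ‖v' x‖ ^ 2) K) {δ : ℝ} (hδ : 0 < δ) :
    ∫ x in A, (v x - ⨍ y in A, v y) ^ 2 ≤
      (1 + δ) * ((Metric.diam K / Real.pi) ^ 2 * ∫ x in K, ‖v' x‖ ^ 2) +
        (δ + δ ^ 2) * volume.real A := by
  have hAK' : A ⊆ K := subset_closure.trans hAK
  have hA_bdd : Bornology.IsBounded A := hbdd.subset hAK'
  have hA_fin : IsFiniteMeasure (volume.restrict A) :=
    isFiniteMeasure_restrict.2 hA_bdd.measure_lt_top.ne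
  obtain ⟨w, hw, hclose, hw'⟩ := exists_contDiff_near_setIntegral_norm_fderiv_sq_le (μ := volume)
    hK hA_bdd.isCompact_closure hAK hv hv' hδ
  set m := ⨍ y in A, w y
  have hw_cont := hw.continuous
  have := hw.continuous_fderiv one_ne_zero
  have hgrad : ∫ x in A, ‖fderiv ℝ w x‖ ^ 2 ≤ ∫ x in K, ‖v' x‖ ^ 2 :=
    (setIntegral_mono_set (integrableOn_of_isBounded (by fun_prop) hA_bdd.closure)
      (.of_forall fun x ↦ sq_nonneg _) subset_closure.eventuallyLE).trans hw'
  have hw_int : IntegrableOn (fun x ↦ (w x - m) ^ 2) A :=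
    integrableOn_of_isBounded (by fun_prop) hA_bdd
  have hw_poincare : ∫ x in A, (w x - m) ^ 2 ≤
      (Metric.diam K / Real.pi) ^ 2 * ∫ x in K, ‖v' x‖ ^ 2 := by
    refine (poincare_sub_average_of_contDiff hconv hA hA_bdd hw).trans ?_
    have hdiam := Metric.diam_mono hAK' hbdd
    gcongr
  have hbound_int : IntegrableOn (fun x ↦ (1 + δ) * (w x - m) ^ 2 + (δ + δ ^ 2)) A :=
    (hw_int.const_mul _).add (integrable_const _)
  calc ∫ x in A, (v x - ⨍ y in A, v y) ^ 2 ≤ ∫ x in A, (v x - m) ^ 2 :=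
        integral_sub_average_sq_le hv_L2 m
    _ ≤ ∫ x in A, ((1 + δ) * (w x - m) ^ 2 + (δ + δ ^ 2)) :=
        setIntegral_mono_on (hv_L2.sub (memLp_const m)).integrable_sq hbound_int
          hA.measurableSet fun x hx ↦ add_sq_le_of_abs_sub_le hδ (by
            rw [sub_sub_sub_cancel_right, abs_sub_comm]
            exact hclose x (subset_closure hx))
    _ = (1 + δ) * (∫ x in A, (w x - m) ^ 2) + (δ + δ ^ 2) * volume.real A := by
        rw [integral_add (hw_int.const_mul _) (integrable_const _), integral_const_mul,
          setIntegral_const, smul_eq_mul, mul_comm (volume.real A)]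
    _ ≤ _ := by gcongr

lemma poincare_of_closure_subset {A : Set E} (hconv : Convex ℝ A) (hA : IsOpen A)
    (hK : IsOpen K) (hbdd : Bornology.IsBounded K) (hAK : closure A ⊆ K)
    (hv : ∀ x ∈ K, HasFDerivAt v (v' x) x) (hv_L2 : MemLp v 2 (volume.restrict A))
    (hv' : IntegrableOn (fun x ↦ ‖v' x‖ ^ 2) K) :
    ∫ x in A, (v x - ⨍ y in A, v y) ^ 2 ≤
      (Metric.diam K / Real.pi) ^ 2 * ∫ x in K, ‖v' x‖ ^ 2 := by
  set C := (Metric.diam K / Real.pi) ^ 2 * ∫ x in K, ‖v' x‖ ^ 2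
  have hcont : Continuous fun δ : ℝ ↦ (1 + δ) * C + (δ + δ ^ 2) * volume.real A := by fun_prop
  have hlim : Tendsto (fun δ : ℝ ↦ (1 + δ) * C + (δ + δ ^ 2) * volume.real A) (𝓝[>] 0) (𝓝 C) :=
    (hcont.tendsto' 0 C (by simp)).mono_left nhdsWithin_le_nhds
  exact ge_of_tendsto hlim (eventually_mem_nhdsWithin.mono fun δ hδ ↦
    poincare_of_closure_subset_add hconv hA hK hbdd hAK hv hv_L2 hv' hδ)

theorem poincare_of_hasFDerivAt (hconv : Convex ℝ K) (hopen : IsOpen K)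
    (hbdd : Bornology.IsBounded K) (hne : K.Nonempty) (hv : ∀ x ∈ K, HasFDerivAt v (v' x) x)
    (hv_L2 : MemLp v 2 (volume.restrict K)) (hv' : IntegrableOn (fun x ↦ ‖v' x‖ ^ 2) K) :
    ∫ x in K, (v x - ⨍ y in K, v y) ^ 2 ≤
      (Metric.diam K / Real.pi) ^ 2 * ∫ x in K, ‖v' x‖ ^ 2 := by
  obtain ⟨x₀, hx₀⟩ := hne
  set C := (Metric.diam K / Real.pi) ^ 2 * ∫ x in K, ‖v' x‖ ^ 2
  set m := ⨍ y in K, v y with hm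
  let A : ℝ → Set E := fun s ↦ AffineMap.homothety x₀ s ⁻¹' K
  have : IsFiniteMeasure (volume.restrict K) :=
    isFiniteMeasure_restrict.2 hbdd.measure_lt_top.ne
  have hlim : ∀ {g : E → ℝ}, IntegrableOn g K →
      Tendsto (fun s ↦ ∫ x in A s, g x) (𝓝[>] 1) (𝓝 (∫ x in K, g x)) :=
    tendsto_setIntegral_preimage_homothety hconv hopen hx₀
  have hvol : Tendsto (fun s ↦ volume.real (A s)) (𝓝[>] 1) (𝓝 (volume.real K)) := by
    simpa using hlim (integrable_const (1 : ℝ))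
  have hvolK : volume.real K ≠ 0 :=
    (ENNReal.toReal_pos (hopen.measure_pos volume ⟨x₀, hx₀⟩).ne' hbdd.measure_lt_top.ne).ne'
  have havg : Tendsto (fun s ↦ ⨍ y in A s, v y) (𝓝[>] 1) (𝓝 m) := by
    simpa only [hm, setAverage_eq] using
      (hvol.inv₀ hvolK).smul (hlim (hv_L2.integrable one_le_two))
  have hbound : Tendsto (fun s ↦ C + volume.real (A s) * ((⨍ y in A s, v y) - m) ^ 2) (𝓝[>] 1)
      (𝓝 C) := by
    simpa using (hvol.mul ((havg.sub_const m).pow 2)).const_add C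
  refine le_of_tendsto_of_tendsto (hlim (hv_L2.sub (memLp_const m)).integrable_sq) hbound ?_
  filter_upwards [self_mem_nhdsWithin] with s hs
  have hclosure : closure (A s) ⊆ K := closure_preimage_homothety_subset hconv hopen hx₀ hs
  have hAK : A s ⊆ K := subset_closure.trans hclosure
  have hv_A : MemLp v 2 (volume.restrict (A s)) :=
    hv_L2.mono_measure (Measure.restrict_mono hAK le_rfl)
  have : IsFiniteMeasure (volume.restrict (A s)) :=
    isFiniteMeasure_restrict.2 (hbdd.subset hAK).measure_lt_top.ne
  have hformula := integral_sub_const_sq hv_A m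
  rw [measureReal_restrict_apply_univ] at hformula
  exact hformula.trans_le (add_le_add_left (poincare_of_closure_subset (hconv.affine_preimage _)
    (hopen.preimage (AffineMap.homothety_continuous x₀ s)) hopen hbdd hclosure hv hv_A hv') _)

end Main

end PayneWeinberger


open PayneWeinberger in
theorem poincare_convex_general {E : Type*} [NormedAddCommGroup E] [InnerProductSpace ℝ E]
    [FiniteDimensional ℝ E] [MeasurableSpace E] [BorelSpace E] (K : Set E)
    (hconv : Convex ℝ K) (hopen : IsOpen K) (hbdd : Bornology.IsBounded K) (hne : K.Nonempty)
    (v : E → ℝ) (v' : E → (E →L[ℝ] ℝ)) (hv : ∀ x ∈ K, HasFDerivAt v (v' x) x)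
    (hv_sq : IntegrableOn (fun x => (v x) ^ 2) K)
    (hv'_sq : IntegrableOn (fun x => ‖v' x‖ ^ 2) K) :
    Real.sqrt (∫ x in K, (v x - ⨍ y in K, v y) ^ 2) ≤
      (1 / Real.pi) * Metric.diam K * Real.sqrt (∫ x in K, ‖v' x‖ ^ 2) := by
  have hv_cont : ContinuousOn v K := fun x hx ↦ (hv x hx).continuousAt.continuousWithinAt
  have hv_L2 : MemLp v 2 (volume.restrict K) :=
    (memLp_two_iff_integrable_sq (hv_cont.aestronglyMeasurable hopen.measurableSet)).2 hv_sq
  have hdiam : 0 ≤ Metric.diam K / Real.pi := div_nonneg Metric.diam_nonneg Real.pi_pos.le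
  calc Real.sqrt (∫ x in K, (v x - ⨍ y in K, v y) ^ 2)
      ≤ Real.sqrt ((Metric.diam K / Real.pi) ^ 2 * ∫ x in K, ‖v' x‖ ^ 2) :=
        Real.sqrt_le_sqrt (poincare_of_hasFDerivAt hconv hopen hbdd hne hv hv_L2 hv'_sq)
    _ = (1 / Real.pi) * Metric.diam K * Real.sqrt (∫ x in K, ‖v' x‖ ^ 2) := by
        rw [Real.sqrt_mul (sq_nonneg _), Real.sqrt_sq hdiam, div_eq_mul_one_div, mul_comm _ (1 / _)]

/-- Payne–Weinberger: optimal Poincaré inequality on a bounded convex open set `K ⊂ ℝ^d`: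
`‖v - v_m‖_{L²(K)} ≤ (1/π) · diam K · ‖∇v‖_{L²(K)}`. -/
theorem poincare_convex (d : ℕ) (K : Set (EuclideanSpace ℝ (Fin d)))
    (hconv : Convex ℝ K) (hopen : IsOpen K) (hbdd : Bornology.IsBounded K)
    (hne : K.Nonempty)
    (v : EuclideanSpace ℝ (Fin d) → ℝ)
    (v' : EuclideanSpace ℝ (Fin d) → (EuclideanSpace ℝ (Fin d) →L[ℝ] ℝ))
    (hv : ∀ x ∈ K, HasFDerivAt v (v' x) x)
    (hv1 : IntegrableOn v K)
    (hv2 : IntegrableOn (fun x => (v x) ^ 2) K)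
    (hv3 : IntegrableOn (fun x => ‖v' x‖ ^ 2) K) :
    Real.sqrt (∫ x in K, (v x - ⨍ y in K, v y) ^ 2) ≤
      (1 / Real.pi) * Metric.diam K * Real.sqrt (∫ x in K, ‖v' x‖ ^ 2) :=
  poincare_convex_general K hconv hopen hbdd hne v v' hv hv2 hv3
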